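/- arXiv:0805.4482 — 5 statements merged into one kernel-verified Lean document; each statement's English description precedes it below -/
import Mathlib

section
/- Let β ≥ 1 be an integer and let y₁, y₂, y₃ be pairwise distinct real numbers. Define Φ on the open set U = {(x₁,x₂,x₃) ∈ ℝ³ : x₁, x₂, x₃ pairwise distinct} by Φ(x) = [ Σ_{k=0}^{β−1} ((β−k−1)!/(β+k−1)!) · (1/(8^k k!)) · Q̃_{β,k}(a) Q̃_{β,k}(b) Q̃_{β,k}(c) / (abc)^{2β} ] · e^{x₁y₁+x₂y₂+x₃y₃}, where a = (x₁−x₂)(y₁−y₂)/2, b = (x₁−x₃)(y₁−y₃)/2, c = (x₂−x₃)(y₂−y₃)/2. Then Φ is smooth on U and satisfies the Calogero equation: for every x ∈ U, Σ_{i=1}^{3} ∂²Φ/∂x_i²(x) + 2β Σ_{1≤i<j≤3} (1/(x_i−x_j)) (∂Φ/∂x_i(x) − ∂Φ/∂x_j(x)) = (y₁²+y₂²+y₃²) Φ(x). -/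
open Finset Function

/-- The signed polynomial
`Q̃_{β,k}(x) = Σ_{l=0}^{β-k-1} (−1)^{l+k} (β+l+k−1)!/((β−l−k−1)! l!) 2^{−l} x^{β−l−k}`
(the empty sum when `k ≥ β`), as a function on `ℝ`. -/
noncomputable def Qtilde (β k : ℕ) (x : ℝ) : ℝ :=
  ∑ l ∈ Finset.range (β - k),
    (-1 : ℝ) ^ (l + k) * (Nat.factorial (β + l + k - 1) : ℝ) /
      (Nat.factorial (β - l - k - 1) * Nat.factorial l) * (1 / 2) ^ l * x ^ (β - l - k)

/-- The candidate Calogero eigenfunction for `n = 3`: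
`Φ(x) = [Σ_{k=0}^{β−1} ((β−k−1)!/(β+k−1)!) (1/(8^k k!)) Q̃_{β,k}(a)Q̃_{β,k}(b)Q̃_{β,k}(c)/(abc)^{2β}] e^{Σ xᵢyᵢ}`
where `a = (x₁−x₂)(y₁−y₂)/2`, `b = (x₁−x₃)(y₁−y₃)/2`, `c = (x₂−x₃)(y₂−y₃)/2`. -/
noncomputable def Phi (β : ℕ) (y : Fin 3 → ℝ) (x : Fin 3 → ℝ) : ℝ :=
  (∑ k ∈ Finset.range β,
      (Nat.factorial (β - k - 1) : ℝ) / (Nat.factorial (β + k - 1)) *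
        (1 / (8 ^ k * Nat.factorial k)) *
        (Qtilde β k ((x 0 - x 1) * (y 0 - y 1) / 2) *
          Qtilde β k ((x 0 - x 2) * (y 0 - y 2) / 2) *
          Qtilde β k ((x 1 - x 2) * (y 1 - y 2) / 2)) /
        ((x 0 - x 1) * (y 0 - y 1) / 2 * ((x 0 - x 2) * (y 0 - y 2) / 2) *
          ((x 1 - x 2) * (y 1 - y 2) / 2)) ^ (2 * β)) *
    Real.exp (∑ i, x i * y i)

/-- `p(m)`: coefficients of the Bessel-type polynomial. -/
noncomputable def pco (β m : ℕ) : ℝ :=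
  if m < β then (-1 : ℝ) ^ m * (Nat.factorial (β + m - 1) : ℝ) /
    (Nat.factorial (β - m - 1) * Nat.factorial m) * (1 / 2) ^ m else 0

noncomputable def qco (β k m : ℕ) : ℝ := 2 ^ k * pco β m * (Nat.descFactorial m k : ℝ)

noncomputable def hh (β k : ℕ) (z : ℝ) : ℝ := Qtilde β k z / z ^ (2 * β)

lemma desc_succ (m k : ℕ) :
    (Nat.descFactorial m (k + 1) : ℝ) = ((m : ℝ) - k) * Nat.descFactorial m k := by
  rw [Nat.descFactorial_succ]
  push_cast
  rcases le_or_gt k m with h | h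
  · rw [Nat.cast_sub h]
  · rw [Nat.descFactorial_eq_zero_iff_lt.2 h]; simp

lemma pco_succ (β m : ℕ) (hβ : 1 ≤ β) :
    2 * ((m : ℝ) + 1) * pco β (m + 1) = -(((β : ℝ) + m) * (β - m - 1)) * pco β m := by
  unfold pco
  by_cases h : m + 1 < β
  · obtain ⟨n, rfl⟩ : ∃ n, β = m + 2 + n := ⟨β - (m + 2), by omega⟩
    rw [if_pos h, if_pos (by omega)]
    have e1 : m + 2 + n + (m + 1) - 1 = (m + 2 + n + m - 1) + 1 := by omega
    have e2 : m + 2 + n - (m + 1) - 1 = n := by omega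
    have e3 : m + 2 + n - m - 1 = n + 1 := by omega
    have e4 : ((m + 2 + n + m - 1 : ℕ) : ℝ) = m + 1 + n + m := by
      rw [show m + 2 + n + m - 1 = m + 1 + n + m by omega]; push_cast; ring
    rw [e1, e2, e3, Nat.factorial_succ, Nat.factorial_succ, Nat.factorial_succ]
    push_cast
    rw [e4]
    have := Nat.factorial_pos m
    have := Nat.factorial_pos n
    field_simp
    ring
  · rw [if_neg h]
    by_cases h2 : m < β
    · have : β = m + 1 := by omega
      subst this; push_cast; ring
    · rw [if_neg h2]; ring

lemma q_succ (β k m : ℕ) : qco β (k + 1) m = 2 * ((m : ℝ) - k) * qco β k m := by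
  unfold qco; rw [desc_succ]; ring

lemma q_succ_succ (β k m : ℕ) (hβ : 1 ≤ β) :
    qco β (k + 1) (m + 1) = -(((β : ℝ) + m) * (β - m - 1)) * qco β k m := by
  unfold qco
  rw [Nat.succ_descFactorial_succ]
  push_cast
  linear_combination 2 ^ k * (Nat.descFactorial m k : ℝ) * pco_succ β m hβ

lemma hh_eq (β k : ℕ) (hβ : 1 ≤ β) (z : ℝ) :
    hh β k z = ∑ m ∈ range β, qco β k m * z⁻¹ ^ (m + β) := by
  unfold hh Qtilde
  rcases le_or_gt k β with hk | hk
  · obtain ⟨n, rfl⟩ := Nat.exists_eq_add_of_le hk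
    rw [Finset.sum_range_add, Finset.sum_eq_zero (s := range k), zero_add]
    · rw [Nat.add_sub_cancel_left, Finset.sum_div]
      apply Finset.sum_congr rfl
      intro l hl
      rw [Finset.mem_range] at hl
      unfold qco pco
      rw [if_pos (by omega)]
      have e1 : k + n + l + k - 1 = k + n + (k + l) - 1 := by omega
      have e2 : k + n - l - k - 1 = k + n - (k + l) - 1 := by omega
      have e3 : k + n - l - k = n - l := by omega
      have hz : z ^ (n - l) / z ^ (2 * (k + n)) = z⁻¹ ^ (k + l + (k + n)) := by
        rcases eq_or_ne z 0 with rfl | hz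
        · rw [zero_pow (by omega), inv_zero, zero_pow (by omega : k + l + (k + n) ≠ 0), zero_div]
        · rw [inv_pow, div_eq_iff (by positivity), ← one_div, div_mul_eq_mul_div, eq_div_iff (by positivity), ← pow_add, one_mul]
          congr 1; omega
      have hd : ((Nat.factorial (k + l) : ℕ) : ℝ) = Nat.factorial l * Nat.descFactorial (k + l) k := by
        have := Nat.factorial_mul_descFactorial (n := k + l) (k := k) (by omega)
        rw [Nat.add_sub_cancel_left] at this
        rw [← this]; push_cast; ring
      have hd0 : (Nat.descFactorial (k + l) k : ℝ) ≠ 0 := by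
        intro h
        rw [h, mul_zero] at hd
        exact (Nat.cast_ne_zero.2 (Nat.factorial_ne_zero _)) hd
      rw [e1, e2, e3, mul_div_assoc, hz, hd]
      have := Nat.factorial_pos l
      have := Nat.factorial_pos (k + n - (k + l) - 1)
      congr 1
      have h2 : (1 / 2 : ℝ) ^ (k + l) * 2 ^ k = (1 / 2) ^ l := by
        rw [pow_add, mul_right_comm, ← mul_pow]; norm_num
      rw [← h2, add_comm l k]
      field_simp
    · intro m hm
      rw [Finset.mem_range] at hm
      unfold qco
      rw [Nat.descFactorial_eq_zero_iff_lt.2 hm]; simp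
  · rw [show β - k = 0 by omega, Finset.range_zero, Finset.sum_empty, zero_div]
    symm
    apply Finset.sum_eq_zero
    intro m hm
    rw [Finset.mem_range] at hm
    unfold qco
    rw [Nat.descFactorial_eq_zero_iff_lt.2 (by omega)]; simp

lemma hh_top (β : ℕ) (z : ℝ) : hh β β z = 0 := by
  unfold hh Qtilde; simp

/-- First derivative of `hh`. -/
noncomputable def h1 (β k : ℕ) (z : ℝ) : ℝ := (-(k + β) * hh β k z - hh β (k + 1) z / 2) / z

/-- Second derivative of `hh`. -/
noncomputable def h2 (β k : ℕ) (z : ℝ) : ℝ :=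
  -2 * h1 β k z - 2 * β / z * (h1 β k z + hh β k z) - 2 * k / z * hh β k z

lemma hh_rec (β k : ℕ) (hβ : 1 ≤ β) (z : ℝ) (hz : z ≠ 0) :
    hh β (k + 2) z / 4 + (k + 1 - z) * hh β (k + 1) z
      - ((β : ℝ) + k) * (β - k - 1) * hh β k z = 0 := by
  have key : z * hh β (k + 1) z = ∑ m ∈ range β,
      (-(((β : ℝ) + m) * (β - m - 1)) * qco β k m) * z⁻¹ ^ (m + β) := by
    rw [hh_eq β _ hβ]
    obtain ⟨n, rfl⟩ : ∃ n, β = n + 1 := ⟨β - 1, by omega⟩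
    rw [Finset.sum_range_succ', Finset.sum_range_succ]
    have h0 : qco (n + 1) (k + 1) 0 = 0 := by simp [qco]
    rw [h0]
    push_cast
    rw [zero_mul, add_zero, show ((n : ℝ) + 1 - n - 1) = 0 by ring]
    rw [mul_zero, neg_zero, zero_mul, zero_mul, add_zero, Finset.mul_sum]
    apply Finset.sum_congr rfl
    intro m _
    rw [q_succ_succ _ _ _ hβ, show m + 1 + (n + 1) = m + (n + 1) + 1 by ring, pow_succ]
    push_cast
    field_simp
  have : (k + 1 - z) * hh β (k + 1) z = (k + 1) * hh β (k + 1) z - z * hh β (k + 1) z := by ring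
  rw [this, key, hh_eq β _ hβ, hh_eq β _ hβ, hh_eq β _ hβ, Finset.sum_div, Finset.mul_sum,
    Finset.mul_sum, ← Finset.sum_sub_distrib, ← Finset.sum_add_distrib, ← Finset.sum_sub_distrib]
  apply Finset.sum_eq_zero
  intro m _
  rw [show k + 2 = k + 1 + 1 by ring, q_succ, q_succ]
  push_cast
  ring

lemma hh_deriv (β k : ℕ) (hβ : 1 ≤ β) (z : ℝ) (hz : z ≠ 0) :
    HasDerivAt (hh β k) (h1 β k z) z := by
  have e : hh β k = fun z => ∑ m ∈ range β, qco β k m * z⁻¹ ^ (m + β) := by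
    funext z; exact hh_eq β k hβ z
  have hd : HasDerivAt (fun z : ℝ => ∑ m ∈ range β, qco β k m * z⁻¹ ^ (m + β))
      (∑ m ∈ range β, qco β k m * (((m + β : ℕ) : ℝ) * z⁻¹ ^ (m + β - 1) * (-(z ^ 2)⁻¹))) z := by
    apply HasDerivAt.fun_sum
    intro m _
    exact ((hasDerivAt_inv hz).fun_pow (m + β)).const_mul _
  rw [e]
  convert hd using 1
  unfold h1
  rw [hh_eq β _ hβ, hh_eq β _ hβ, Finset.sum_div, Finset.mul_sum,
    ← Finset.sum_sub_distrib, Finset.sum_div]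
  apply Finset.sum_congr rfl
  intro m _
  obtain ⟨j, hj⟩ : ∃ j, m + β = j + 1 := ⟨m + β - 1, by omega⟩
  have hj' : (m : ℝ) + β = j + 1 := by exact_mod_cast hj
  rw [hj, Nat.add_sub_cancel, q_succ, pow_succ]
  push_cast
  rw [← hj']
  field_simp
  ring

lemma h1_deriv (β k : ℕ) (hβ : 1 ≤ β) (z : ℝ) (hz : z ≠ 0) :
    HasDerivAt (h1 β k) (h2 β k z) z := by
  have hd := (((hh_deriv β k hβ z hz).const_mul (-(k + β : ℝ))).sub
    ((hh_deriv β (k + 1) hβ z hz).div_const 2)).div (hasDerivAt_id z) hz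
  have hr := hh_rec β k hβ z hz
  refine hd.congr_deriv ?_
  unfold h2 h1
  simp only [id, Pi.sub_apply]
  rw [show k + 1 + 1 = k + 2 by ring]
  push_cast
  field_simp
  linear_combination 4 * hr

/-- The constants `c_k`. -/
noncomputable def cc (β k : ℕ) : ℝ := (Nat.factorial (β - k - 1) : ℝ) / (Nat.factorial (β + k - 1)) *
        (1 / (8 ^ k * Nat.factorial k))

lemma cc_succ (β k : ℕ) (hk : k + 1 < β) :
    8 * ((k : ℝ) + 1) * (((β : ℝ) + k) * (β - k - 1)) * cc β (k + 1) = cc β k := by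
  obtain ⟨n, rfl⟩ : ∃ n, β = k + 2 + n := ⟨β - (k + 2), by omega⟩
  unfold cc
  have e1 : k + 2 + n + (k + 1) - 1 = (k + 2 + n + k - 1) + 1 := by omega
  have e2 : k + 2 + n - (k + 1) - 1 = n := by omega
  have e3 : k + 2 + n - k - 1 = n + 1 := by omega
  have e4 : k + 2 + n + k - 1 = k + 1 + n + k := by omega
  rw [e1, e2, e3, e4, Nat.factorial_succ (k + 1 + n + k), Nat.factorial_succ n, Nat.factorial_succ k]
  have := Nat.factorial_pos k
  have := Nat.factorial_pos n
  have := Nat.factorial_pos (k + 1 + n + k)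
  push_cast
  field_simp
  ring

lemma Mrel (β : ℕ) (hβ : 1 ≤ β) (a b c : ℝ) (hc : c ≠ 0) :
    ∑ k ∈ range β, cc β k * (hh β (k+1) a * hh β (k+1) b * hh β k c) =
    8 * ∑ k ∈ range β, cc β k * ((k:ℝ)^2 * (hh β k a * hh β k b * hh β k c)) +
    2 * ∑ k ∈ range β, cc β k * ((k:ℝ) * (hh β k a * hh β k b * hh β (k+1) c)) -
    8 * c * ∑ k ∈ range β, cc β k * ((k:ℝ) * (hh β k a * hh β k b * hh β k c)) := by
  rw [Finset.mul_sum, Finset.mul_sum, Finset.mul_sum, ← Finset.sum_add_distrib,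
    ← Finset.sum_sub_distrib]
  obtain ⟨n, rfl⟩ : ∃ n, β = n + 1 := ⟨β - 1, by omega⟩
  rw [Finset.sum_range_succ, hh_top, Finset.sum_range_succ' _ n]
  simp only [Nat.cast_zero, zero_mul, mul_zero, add_zero, sub_zero, ne_eq, OfNat.ofNat_ne_zero,
    not_false_eq_true, zero_pow]
  apply Finset.sum_congr rfl
  intro k hk
  rw [Finset.mem_range] at hk
  have h := cc_succ (n + 1) k (by omega)
  have hr := hh_rec (n + 1) k hβ c hc
  rw [← h]
  push_cast at hr ⊢
  linear_combination (-8 * ((k : ℝ) + 1) * cc (n + 1) (k + 1) * hh (n + 1) (k + 1) a *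
    hh (n + 1) (k + 1) b) * hr

lemma lineD (N : Finset ℕ) (f f1 f2 : ℕ → ℝ → ℝ)
    (hf : ∀ k z, z ≠ 0 → HasDerivAt (f k) (f1 k z) z)
    (hf1 : ∀ k z, z ≠ 0 → HasDerivAt (f1 k) (f2 k z) z)
    (κ : ℕ → ℝ) (α γ p q y δ t : ℝ) (hα : α ≠ 0) (hγ : γ ≠ 0) (hp : t ≠ p) (hq : t ≠ q) 
    (F : ℝ → ℝ)
    (hF : ∀ t, F t = (∑ k ∈ N, κ k * (f k (α * (t - p)) * f k (γ * (t - q)))) *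
      Real.exp (y * t + δ)) :
    deriv F t = (∑ k ∈ N, κ k * (α * f1 k (α * (t - p)) * f k (γ * (t - q)) +
      γ * f k (α * (t - p)) * f1 k (γ * (t - q)) +
      y * (f k (α * (t - p)) * f k (γ * (t - q))))) * Real.exp (y * t + δ) ∧
    iteratedDeriv 2 F t = (∑ k ∈ N, κ k * (α ^ 2 * f2 k (α * (t - p)) * f k (γ * (t - q)) +
      γ ^ 2 * f k (α * (t - p)) * f2 k (γ * (t - q)) +
      2 * α * γ * f1 k (α * (t - p)) * f1 k (γ * (t - q)) +
      2 * y * (α * f1 k (α * (t - p)) * f k (γ * (t - q)) +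
        γ * f k (α * (t - p)) * f1 k (γ * (t - q))) +
      y ^ 2 * (f k (α * (t - p)) * f k (γ * (t - q))))) * Real.exp (y * t + δ) := by
  obtain rfl : F = fun t => (∑ k ∈ N, κ k * (f k (α * (t - p)) * f k (γ * (t - q)))) *
      Real.exp (y * t + δ) := funext hF
  have lin : ∀ (α p t : ℝ), HasDerivAt (fun t => α * (t - p)) α t := by
    intro α p t
    simpa using ((hasDerivAt_id t).sub_const p).const_mul α
  have he : ∀ t, HasDerivAt (fun t => Real.exp (y * t + δ)) (Real.exp (y * t + δ) * y) t := by
    intro t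
    have : HasDerivAt (fun t => y * t + δ) y t := by
      simpa using ((hasDerivAt_id t).const_mul y).add_const δ
    exact this.exp
  have comp : ∀ (g g1 : ℕ → ℝ → ℝ) (_ : ∀ k z, z ≠ 0 → HasDerivAt (g k) (g1 k z) z) (α p t : ℝ)
      (k : ℕ), α ≠ 0 → t ≠ p →
      HasDerivAt (fun t => g k (α * (t - p))) (g1 k (α * (t - p)) * α) t := by
    intro g g1 hg α p t k hα hp
    exact (hg k _ (mul_ne_zero hα (sub_ne_zero.2 hp))).comp t (lin α p t)
  have D1 : ∀ t, t ≠ p → t ≠ q → HasDerivAt (fun t => (∑ k ∈ N, κ k * (f k (α * (t - p)) * f k (γ * (t - q)))) *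
      Real.exp (y * t + δ)) ((∑ k ∈ N, κ k * (α * f1 k (α * (t - p)) * f k (γ * (t - q)) +
      γ * f k (α * (t - p)) * f1 k (γ * (t - q)) +
      y * (f k (α * (t - p)) * f k (γ * (t - q))))) * Real.exp (y * t + δ)) t := by
    intro t hp hq
    have := (HasDerivAt.fun_sum (u := N) (fun k _ => (((comp f f1 hf α p t k hα hp).mul
      (comp f f1 hf γ q t k hγ hq)).const_mul (κ k)))).mul (he t)
    refine this.congr_deriv ?_
    simp only [Pi.mul_apply]
    rw [Finset.sum_mul, Finset.sum_mul, Finset.sum_mul, ← Finset.sum_add_distrib]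
    exact Finset.sum_congr rfl fun k _ => by ring
  refine ⟨(D1 t hp hq).deriv, ?_⟩
  rw [iteratedDeriv_succ, iteratedDeriv_one]
  have ev : deriv (fun t => (∑ k ∈ N, κ k * (f k (α * (t - p)) * f k (γ * (t - q)))) *
      Real.exp (y * t + δ)) =ᶠ[nhds t] fun t => ((∑ k ∈ N, κ k * (α * (f1 k (α * (t - p)) * f k (γ * (t - q))) +
      γ * (f k (α * (t - p)) * f1 k (γ * (t - q))) +
      y * (f k (α * (t - p)) * f k (γ * (t - q))))) * Real.exp (y * t + δ)) := by
    filter_upwards [isOpen_ne.mem_nhds hp, isOpen_ne.mem_nhds hq] with s h1 h2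
    rw [(D1 s h1 h2).deriv]
    simp only [mul_assoc]
  rw [ev.deriv_eq]
  have := (HasDerivAt.fun_sum (u := N) (fun k _ => ((((((comp f1 f2 hf1 α p t k hα hp).mul
      (comp f f1 hf γ q t k hγ hq)).const_mul α).add 
      (((comp f f1 hf α p t k hα hp).mul
      (comp f1 f2 hf1 γ q t k hγ hq)).const_mul γ)).add 
      (((comp f f1 hf α p t k hα hp).mul
      (comp f f1 hf γ q t k hγ hq)).const_mul y)).const_mul (κ k)))).mul (he t)
  refine (this.congr_deriv ?_).deriv
  simp only [Pi.mul_apply, Pi.add_apply]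
  rw [Finset.sum_mul, Finset.sum_mul, Finset.sum_mul, ← Finset.sum_add_distrib]
  exact Finset.sum_congr rfl fun k _ => by ring

lemma Phi_eq (β : ℕ) (y x : Fin 3 → ℝ) : Phi β y x =
    (∑ k ∈ range β, cc β k * (hh β k ((x 0 - x 1) * (y 0 - y 1) / 2) *
      hh β k ((x 0 - x 2) * (y 0 - y 2) / 2) * hh β k ((x 1 - x 2) * (y 1 - y 2) / 2))) *
      Real.exp (x 0 * y 0 + x 1 * y 1 + x 2 * y 2) := by
  unfold Phi hh cc
  rw [Fin.sum_univ_three]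
  congr 1
  apply Finset.sum_congr rfl
  intro k _
  rw [mul_pow, mul_pow, mul_div_assoc, mul_div_mul_comm, mul_div_mul_comm]

/-- The purely algebraic heart, after summation. -/
lemma Erel (a b c S K Na Nb Nc Ma Mb Mc A B C : ℝ)
    (hMa : Ma = 8 * S + 2 * Na - 8 * a * K)
    (hMb : Mb = 8 * S + 2 * Nb - 8 * b * K)
    (hMc : Mc = 8 * S + 2 * Nc - 8 * c * K)
    (h : A * (b + c - a) + B * (a + c - b) + C * (a + b - c) = 0) :
    A * (-b*c*K + (c * (S + Na/2 + Nb/2 + Mc/4) + b * (S + Na/2 + Nc/2 + Mb/4)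
       - a * (S + Nb/2 + Nc/2 + Ma/4))/4) +
    B * (-a*c*K + (c * (S + Na/2 + Nb/2 + Mc/4) - b * (S + Na/2 + Nc/2 + Mb/4)
       + a * (S + Nb/2 + Nc/2 + Ma/4))/4) +
    C * (-a*b*K + (-c * (S + Na/2 + Nb/2 + Mc/4) + b * (S + Na/2 + Nc/2 + Mb/4)
       + a * (S + Nb/2 + Nc/2 + Ma/4))/4) = 0 := by
  subst hMa hMb hMc
  linear_combination ((8 * S + 2 * Na - 8 * a * K + (8 * S + 2 * Nb - 8 * b * K) +
    (8 * S + 2 * Nc - 8 * c * K)) / 16 - 3 / 4 * S) * h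

lemma perk (p r P R y β k u v t u' v' t' a b c u1 v1 t1 u2 v2 t2 : ℝ)
    (hp : p ≠ 0) (hr : r ≠ 0) (hpr : p + r ≠ 0) (hP : P ≠ 0) (hR : R ≠ 0) (hPR : P + R ≠ 0)
    (ha : a = p * P / 2) (hb : b = (p + r) * (P + R) / 2) (hc : c = r * R / 2)
    (hu1 : u1 = (-(k + β) * u - u' / 2) / a) (hv1 : v1 = (-(k + β) * v - v' / 2) / b)
    (ht1 : t1 = (-(k + β) * t - t' / 2) / c)
    (hu2 : u2 = -2 * u1 - 2 * β / a * (u1 + u) - 2 * k / a * u)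
    (hv2 : v2 = -2 * v1 - 2 * β / b * (v1 + v) - 2 * k / b * v)
    (ht2 : t2 = -2 * t1 - 2 * β / c * (t1 + t) - 2 * k / c * t) :
    (t * ((P/2)^2 * u2 * v + ((P+R)/2)^2 * u * v2 + 2 * (P/2) * ((P+R)/2) * u1 * v1 +
        2 * (y+R+P) * ((P/2) * u1 * v + ((P+R)/2) * u * v1) + (y+R+P)^2 * (u * v))) +
    (v * ((-P/2)^2 * u2 * t + (R/2)^2 * u * t2 + 2 * (-P/2) * (R/2) * u1 * t1 +
        2 * (y+R) * ((-P/2) * u1 * t + (R/2) * u * t1) + (y+R)^2 * (u * t))) +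
    (u * ((-(P+R)/2)^2 * v2 * t + (-R/2)^2 * v * t2 + 2 * (-(P+R)/2) * (-R/2) * v1 * t1 +
        2 * y * ((-(P+R)/2) * v1 * t + (-R/2) * v * t1) + y^2 * (v * t))) +
    2 * β * (
      1 / p * ((t * ((P/2) * u1 * v + ((P+R)/2) * u * v1 + (y+R+P) * (u * v)))
        - (v * ((-P/2) * u1 * t + (R/2) * u * t1 + (y+R) * (u * t)))) +
      1 / (p + r) * ((t * ((P/2) * u1 * v + ((P+R)/2) * u * v1 + (y+R+P) * (u * v)))
        - (u * ((-(P+R)/2) * v1 * t + (-R/2) * v * t1 + y * (v * t)))) +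
      1 / r * ((v * ((-P/2) * u1 * t + (R/2) * u * t1 + (y+R) * (u * t))) -
        (u * ((-(P+R)/2) * v1 * t + (-R/2) * v * t1 + y * (v * t))))) -
    ((y+R+P)^2 + (y+R)^2 + y^2) * (u * v * t) =
    1 / (a * b * c) * (
    P^2 * (-b*c*(k*(u*v*t)) + (c * (k^2*(u*v*t) + k*(u'*v*t)/2 + k*(u*v'*t)/2 + (u'*v'*t)/4) + b * (k^2*(u*v*t) + k*(u'*v*t)/2 + k*(u*v*t')/2 + (u'*v*t')/4)
       - a * (k^2*(u*v*t) + k*(u*v'*t)/2 + k*(u*v*t')/2 + (u*v'*t')/4))/4) +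
    (P+R)^2 * (-a*c*(k*(u*v*t)) + (c * (k^2*(u*v*t) + k*(u'*v*t)/2 + k*(u*v'*t)/2 + (u'*v'*t)/4) - b * (k^2*(u*v*t) + k*(u'*v*t)/2 + k*(u*v*t')/2 + (u'*v*t')/4)
       + a * (k^2*(u*v*t) + k*(u*v'*t)/2 + k*(u*v*t')/2 + (u*v'*t')/4))/4) +
    R^2 * (-a*b*(k*(u*v*t)) + (-c * (k^2*(u*v*t) + k*(u'*v*t)/2 + k*(u*v'*t)/2 + (u'*v'*t)/4) + b * (k^2*(u*v*t) + k*(u'*v*t)/2 + k*(u*v*t')/2 + (u'*v*t')/4)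
       + a * (k^2*(u*v*t) + k*(u*v'*t)/2 + k*(u*v*t')/2 + (u*v'*t')/4))/4)) := by
  subst hu2 hv2 ht2 hu1 hv1 ht1 ha hb hc
  field_simp
  ring

lemma core (β : ℕ) (hβ : 1 ≤ β) (x y : Fin 3 → ℝ) (h01 : x 0 ≠ x 1) (h02 : x 0 ≠ x 2)
    (h12 : x 1 ≠ x 2) (k01 : y 0 - y 1 ≠ 0) (k02 : y 0 - y 2 ≠ 0) (k12 : y 1 - y 2 ≠ 0) :
    iteratedDeriv 2 (fun t => Phi β y (Function.update x 0 t)) (x 0) +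
      iteratedDeriv 2 (fun t => Phi β y (Function.update x 1 t)) (x 1) +
      iteratedDeriv 2 (fun t => Phi β y (Function.update x 2 t)) (x 2) +
    2 * (β : ℝ) * (1 / (x 0 - x 1) * (deriv (fun t => Phi β y (Function.update x 0 t)) (x 0) -
        deriv (fun t => Phi β y (Function.update x 1 t)) (x 1)) +
      1 / (x 0 - x 2) * (deriv (fun t => Phi β y (Function.update x 0 t)) (x 0) -
        deriv (fun t => Phi β y (Function.update x 2 t)) (x 2)) +
      1 / (x 1 - x 2) * (deriv (fun t => Phi β y (Function.update x 1 t)) (x 1) -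
        deriv (fun t => Phi β y (Function.update x 2 t)) (x 2)) + 0) =
    (y 0 ^ 2 + y 1 ^ 2 + y 2 ^ 2) * ((∑ k ∈ range β, cc β k * (hh β k ((x 0 - x 1) * (y 0 - y 1) / 2) *
      hh β k ((x 0 - x 2) * (y 0 - y 2) / 2) * hh β k ((x 1 - x 2) * (y 1 - y 2) / 2))) *
      Real.exp (x 0 * y 0 + x 1 * y 1 + x 2 * y 2)) := by
  obtain ⟨d0, i0⟩ := lineD (range β) (hh β) (h1 β) (h2 β) (fun k z hz => hh_deriv β k hβ z hz)
    (fun k z hz => h1_deriv β k hβ z hz)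
    (fun k => cc β k * hh β k ((x 1 - x 2) * (y 1 - y 2) / 2)) ((y 0 - y 1) / 2) ((y 0 - y 2) / 2)
    (x 1) (x 2) (y 0) (x 1 * y 1 + x 2 * y 2) (x 0) (by positivity) (by positivity) h01 h02
    (fun t => Phi β y (Function.update x 0 t)) (by
      intro t
      simp only [Phi_eq]
      simp only [Function.update_self, Function.update_of_ne (show (1 : Fin 3) ≠ 0 by decide),
        Function.update_of_ne (show (2 : Fin 3) ≠ 0 by decide)]
      congr 1
      · refine Finset.sum_congr rfl fun k _ => ?_
        rw [show (t - x 1) * (y 0 - y 1) / 2 = (y 0 - y 1) / 2 * (t - x 1) by ring,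
          show (t - x 2) * (y 0 - y 2) / 2 = (y 0 - y 2) / 2 * (t - x 2) by ring]
        ring
      · congr 1; ring)
  obtain ⟨d1, i1⟩ := lineD (range β) (hh β) (h1 β) (h2 β) (fun k z hz => hh_deriv β k hβ z hz)
    (fun k z hz => h1_deriv β k hβ z hz)
    (fun k => cc β k * hh β k ((x 0 - x 2) * (y 0 - y 2) / 2)) (-(y 0 - y 1) / 2) ((y 1 - y 2) / 2)
    (x 0) (x 2) (y 1) (x 0 * y 0 + x 2 * y 2) (x 1)
    (div_ne_zero (neg_ne_zero.2 k01) two_ne_zero) (by positivity) h01.symm h12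
    (fun t => Phi β y (Function.update x 1 t)) (by
      intro t
      simp only [Phi_eq]
      simp only [Function.update_self, Function.update_of_ne (show (0 : Fin 3) ≠ 1 by decide),
        Function.update_of_ne (show (2 : Fin 3) ≠ 1 by decide)]
      congr 1
      · refine Finset.sum_congr rfl fun k _ => ?_
        rw [show (x 0 - t) * (y 0 - y 1) / 2 = -(y 0 - y 1) / 2 * (t - x 0) by ring,
          show (t - x 2) * (y 1 - y 2) / 2 = (y 1 - y 2) / 2 * (t - x 2) by ring]
        ring
      · congr 1; ring)
  obtain ⟨d2, i2⟩ := lineD (range β) (hh β) (h1 β) (h2 β) (fun k z hz => hh_deriv β k hβ z hz)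
    (fun k z hz => h1_deriv β k hβ z hz)
    (fun k => cc β k * hh β k ((x 0 - x 1) * (y 0 - y 1) / 2)) (-(y 0 - y 2) / 2) (-(y 1 - y 2) / 2)
    (x 0) (x 1) (y 2) (x 0 * y 0 + x 1 * y 1) (x 2)
    (div_ne_zero (neg_ne_zero.2 k02) two_ne_zero) (div_ne_zero (neg_ne_zero.2 k12) two_ne_zero)
    h02.symm h12.symm
    (fun t => Phi β y (Function.update x 2 t)) (by
      intro t
      simp only [Phi_eq]
      simp only [Function.update_self, Function.update_of_ne (show (0 : Fin 3) ≠ 2 by decide),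
        Function.update_of_ne (show (1 : Fin 3) ≠ 2 by decide)]
      congr 1
      · refine Finset.sum_congr rfl fun k _ => ?_
        rw [show (x 0 - t) * (y 0 - y 2) / 2 = -(y 0 - y 2) / 2 * (t - x 0) by ring,
          show (x 1 - t) * (y 1 - y 2) / 2 = -(y 1 - y 2) / 2 * (t - x 1) by ring]
        ring
      · congr 1; ring)
  rw [d0, d1, d2, i0, i1, i2]
  clear d0 d1 d2 i0 i1 i2
  rw [show y 0 * x 0 + (x 1 * y 1 + x 2 * y 2) = x 0 * y 0 + x 1 * y 1 + x 2 * y 2 by ring,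
    show y 1 * x 1 + (x 0 * y 0 + x 2 * y 2) = x 0 * y 0 + x 1 * y 1 + x 2 * y 2 by ring,
    show y 2 * x 2 + (x 0 * y 0 + x 1 * y 1) = x 0 * y 0 + x 1 * y 1 + x 2 * y 2 by ring,
    show (y 0 - y 1) / 2 * (x 0 - x 1) = (x 0 - x 1) * (y 0 - y 1) / 2 by ring,
    show (y 0 - y 2) / 2 * (x 0 - x 2) = (x 0 - x 2) * (y 0 - y 2) / 2 by ring,
    show -(y 0 - y 1) / 2 * (x 1 - x 0) = (x 0 - x 1) * (y 0 - y 1) / 2 by ring,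
    show (y 1 - y 2) / 2 * (x 1 - x 2) = (x 1 - x 2) * (y 1 - y 2) / 2 by ring,
    show -(y 0 - y 2) / 2 * (x 2 - x 0) = (x 0 - x 2) * (y 0 - y 2) / 2 by ring,
    show -(y 1 - y 2) / 2 * (x 2 - x 1) = (x 1 - x 2) * (y 1 - y 2) / 2 by ring]
  generalize Real.exp (x 0 * y 0 + x 1 * y 1 + x 2 * y 2) = E
  replace h01 := sub_ne_zero.2 h01
  replace h02 := sub_ne_zero.2 h02
  replace h12 := sub_ne_zero.2 h12
  have ha0 : (x 0 - x 1) * (y 0 - y 1) / 2 ≠ 0 := by positivity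
  have hb0 : (x 0 - x 2) * (y 0 - y 2) / 2 ≠ 0 := by positivity
  have hc0 : (x 1 - x 2) * (y 1 - y 2) / 2 ≠ 0 := by positivity
  obtain ⟨p, hp⟩ : ∃ p, x 0 - x 1 = p := ⟨_, rfl⟩
  obtain ⟨r, hr⟩ : ∃ p, x 1 - x 2 = p := ⟨_, rfl⟩
  have hpr : x 0 - x 2 = p + r := by rw [← hp, ← hr]; ring
  obtain ⟨P, hP⟩ : ∃ p, y 0 - y 1 = p := ⟨_, rfl⟩
  obtain ⟨R, hR⟩ : ∃ p, y 1 - y 2 = p := ⟨_, rfl⟩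
  have hPR : y 0 - y 2 = P + R := by rw [← hP, ← hR]; ring
  have hy1 : y 1 = y 2 + R := by rw [← hR]; ring
  have hy0 : y 0 = y 2 + R + P := by rw [← hR, ← hP]; ring
  rw [hp, hP] at ha0
  rw [hpr, hPR] at hb0
  rw [hr, hR] at hc0
  rw [hp] at h01
  rw [hpr] at h02
  rw [hr] at h12
  rw [hP] at k01
  rw [hPR] at k02
  rw [hR] at k12
  rw [hp, hr, hpr, hP, hR, hPR, hy1, hy0]
  generalize y 2 = z
  clear hy0 hy1 hPR hR hP hpr hr hp
  obtain ⟨a, ha⟩ : ∃ a, a = p * P / 2 := ⟨_, rfl⟩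
  obtain ⟨b, hb⟩ : ∃ b, b = (p + r) * (P + R) / 2 := ⟨_, rfl⟩
  obtain ⟨c, hc⟩ : ∃ c, c = r * R / 2 := ⟨_, rfl⟩
  rw [← ha] at ha0
  rw [← hb] at hb0
  rw [← hc] at hc0
  rw [← ha, ← hb, ← hc]
  have Mc := Mrel β hβ a b c hc0
  have Mb := Mrel β hβ a c b hb0
  have Ma := Mrel β hβ b c a ha0
  simp only [show ∀ i j l, hh β i b * hh β j c * hh β l a = hh β l a * hh β i b * hh β j c from
    fun i j l => by ring] at Ma
  simp only [show ∀ i j l, hh β i a * hh β j c * hh β l b = hh β i a * hh β l b * hh β j c from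
    fun i j l => by ring] at Mb
  have key := Erel a b c
    (∑ k ∈ range β, cc β k * ((k:ℝ)^2 * (hh β k a * hh β k b * hh β k c)))
    (∑ k ∈ range β, cc β k * ((k:ℝ) * (hh β k a * hh β k b * hh β k c)))
    (∑ k ∈ range β, cc β k * ((k:ℝ) * (hh β (k+1) a * hh β k b * hh β k c)))
    (∑ k ∈ range β, cc β k * ((k:ℝ) * (hh β k a * hh β (k+1) b * hh β k c)))
    (∑ k ∈ range β, cc β k * ((k:ℝ) * (hh β k a * hh β k b * hh β (k+1) c)))
    (∑ k ∈ range β, cc β k * (hh β k a * hh β (k+1) b * hh β (k+1) c))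
    (∑ k ∈ range β, cc β k * (hh β (k+1) a * hh β k b * hh β (k+1) c))
    (∑ k ∈ range β, cc β k * (hh β (k+1) a * hh β (k+1) b * hh β k c))
    (P ^ 2) ((P + R) ^ 2) (R ^ 2)
    Ma Mb Mc (by rw [ha, hb, hc]; ring)
  rw [add_zero, ← sub_eq_zero, ← mul_zero (E * (1 / (a * b * c))), ← key]
  simp only [Finset.mul_sum, Finset.sum_mul, Finset.sum_div, ← Finset.sum_add_distrib,
    ← Finset.sum_sub_distrib]
  refine Finset.sum_congr rfl fun k _ => ?_
  have := perk p r P R z β k (hh β k a) (hh β k b) (hh β k c) (hh β (k+1) a) (hh β (k+1) b)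
    (hh β (k+1) c) a b c (h1 β k a) (h1 β k b) (h1 β k c) (h2 β k a) (h2 β k b) (h2 β k c)
    h01 h12 h02 k01 k12 k02 ha hb hc rfl rfl rfl rfl rfl rfl
  linear_combination E * cc β k * this

/-- for an integer `β ≥ 1` and pairwise distinct `y₁, y₂, y₃`, the
function `Φ` is smooth on the open set `U` of points with pairwise distinct coordinates
and satisfies the Calogero equation
`Σᵢ ∂²Φ/∂xᵢ² + 2β Σ_{i<j} (∂Φ/∂xᵢ − ∂Φ/∂xⱼ)/(xᵢ−xⱼ) = (Σᵢ yᵢ²) Φ` on `U`. -/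
theorem statement11 (β : ℕ) (hβ : 1 ≤ β) (y : Fin 3 → ℝ)
    (hy : ∀ i j : Fin 3, i ≠ j → y i ≠ y j) :
    ContDiffOn ℝ (⊤ : ℕ∞) (Phi β y) {x : Fin 3 → ℝ | ∀ i j : Fin 3, i ≠ j → x i ≠ x j} ∧
    ∀ x : Fin 3 → ℝ, (∀ i j : Fin 3, i ≠ j → x i ≠ x j) →
      (∑ i : Fin 3, iteratedDeriv 2 (fun t => Phi β y (Function.update x i t)) (x i)) +
        2 * (β : ℝ) *
          ∑ i : Fin 3, ∑ j ∈ Finset.univ.filter (fun j => i < j),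
            (1 / (x i - x j)) *
              (deriv (fun t => Phi β y (Function.update x i t)) (x i) -
                deriv (fun t => Phi β y (Function.update x j t)) (x j)) =
      (∑ i : Fin 3, (y i) ^ 2) * Phi β y x := by
  constructor
  · unfold Phi Qtilde
    simp only [Fin.sum_univ_three]
    apply ContDiffOn.mul
    · apply ContDiffOn.sum
      intro k _
      apply ContDiffOn.div
      · apply ContDiff.contDiffOn; fun_prop
      · apply ContDiff.contDiffOn; fun_prop
      · intro x hx
        have h01 := sub_ne_zero.2 (hx 0 1 (by decide))
        have h02 := sub_ne_zero.2 (hx 0 2 (by decide))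
        have h12 := sub_ne_zero.2 (hx 1 2 (by decide))
        have k01 := sub_ne_zero.2 (hy 0 1 (by decide))
        have k02 := sub_ne_zero.2 (hy 0 2 (by decide))
        have k12 := sub_ne_zero.2 (hy 1 2 (by decide))
        positivity
    · apply ContDiff.contDiffOn; fun_prop
  · intro x hx
    have h01 := hx 0 1 (by decide)
    have h02 := hx 0 2 (by decide)
    have h12 := hx 1 2 (by decide)
    have k01 := sub_ne_zero.2 (hy 0 1 (by decide))
    have k02 := sub_ne_zero.2 (hy 0 2 (by decide))
    have k12 := sub_ne_zero.2 (hy 1 2 (by decide))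
    have f0 : Finset.univ.filter (fun j : Fin 3 => 0 < j) = {1, 2} := by decide
    have f1 : Finset.univ.filter (fun j : Fin 3 => 1 < j) = {2} := by decide
    have f2 : Finset.univ.filter (fun j : Fin 3 => 2 < j) = ∅ := by decide
    rw [Fin.sum_univ_three, Fin.sum_univ_three, Fin.sum_univ_three, f0, f1, f2,
      Finset.sum_empty, Finset.sum_singleton, Finset.sum_pair (by decide), Phi_eq]
    exact core β hβ x y h01 h02 h12 k01 k02 k12
end

section
/- Let n ≥ 1, let μ be the Haar probability measure on the unitary group U(n) of n×n complex matrices, let x = (x₁,…,x_n) ∈ ℝⁿ, and let y = (y₁,…,y_n) ∈ ℝⁿ have pairwise distinct entries. For 1 ≤ i, j ≤ n define M_{i,j}(x, y) = ∫_{U(n)} |U_{ij}|² · exp(Re tr(X U Y U⁻¹)) dμ(U), where X = diag(x₁,…,x_n) and Y = diag(y₁,…,y_n). Then for each i, j, the function y_j ↦ M_{i,j}(x,y) is differentiable and ∂M_{i,j}/∂y_j + Σ_{l≠j} (M_{i,l} − M_{i,j})/(y_l − y_j) = x_i · M_{i,j}. -/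
open MeasureTheory Matrix Finset Function

noncomputable instance {n : ℕ} : MeasurableSpace (Matrix (Fin n) (Fin n) ℂ) :=
  inferInstanceAs (MeasurableSpace (Fin n → Fin n → ℂ))

/-- The quadratic (Morozov) moment `M_{i,j}(x,y) = ∫_{U(n)} |U_{ij}|² e^{Re tr(X U Y U⁻¹)} dμ(U)`
where `X = diag x` and `Y = diag y`. -/
noncomputable def Mmom (n : ℕ) (μ : Measure (Matrix.unitaryGroup (Fin n) ℂ))
    (x y : Fin n → ℝ) (i j : Fin n) : ℝ :=
  ∫ U : Matrix.unitaryGroup (Fin n) ℂ,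
    ‖(U : Matrix (Fin n) (Fin n) ℂ) i j‖ ^ 2 *
      Real.exp ((Matrix.trace (Matrix.diagonal (fun l => (x l : ℂ)) *
        (U : Matrix (Fin n) (Fin n) ℂ) * Matrix.diagonal (fun l => (y l : ℂ)) *
        ((U⁻¹ : Matrix.unitaryGroup (Fin n) ℂ) : Matrix (Fin n) (Fin n) ℂ))).re) ∂μ

namespace DunklUnitary

abbrev UG (n : ℕ) : Type := ↥(Matrix.unitaryGroup (Fin n) ℂ)

instance borelMat (n : ℕ) : BorelSpace (Matrix (Fin n) (Fin n) ℂ) :=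
  inferInstanceAs (BorelSpace (Fin n → Fin n → ℂ))

instance secMat (n : ℕ) : SecondCountableTopology (Matrix (Fin n) (Fin n) ℂ) :=
  inferInstanceAs (SecondCountableTopology (Fin n → Fin n → ℂ))

instance properMat (n : ℕ) : T2Space (Matrix (Fin n) (Fin n) ℂ) :=
  inferInstanceAs (T2Space (Fin n → Fin n → ℂ))

instance borelUG (n : ℕ) : BorelSpace (UG n) :=
  inferInstanceAs (BorelSpace {U : Matrix (Fin n) (Fin n) ℂ // U ∈ Matrix.unitaryGroup (Fin n) ℂ})

instance compactUG (n : ℕ) : CompactSpace (UG n) := by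
  apply isCompact_iff_compactSpace.mp
  have hK : IsCompact (Set.pi Set.univ (fun _ : Fin n => Set.pi Set.univ
      (fun _ : Fin n => Metric.closedBall (0 : ℂ) 1))) :=
    isCompact_univ_pi fun _ => isCompact_univ_pi fun _ => isCompact_closedBall _ _
  refine IsCompact.of_isClosed_subset (X := Matrix (Fin n) (Fin n) ℂ) hK ?_ ?_
  · have : ((Matrix.unitaryGroup (Fin n) ℂ : Submonoid _) : Set (Matrix (Fin n) (Fin n) ℂ))
        = {U | U * star U = 1} := by
      ext U; exact Matrix.mem_unitaryGroup_iff
    rw [this]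
    exact isClosed_eq (by fun_prop) continuous_const
  · intro U hU a _ b _
    simpa using entry_norm_bound_of_unitary hU a b

lemma map_mul_right {n : ℕ} (μ : Measure (UG n)) [μ.IsHaarMeasure] [IsProbabilityMeasure μ]
    (g : UG n) : Measure.map (· * g) μ = μ := by
  have : IsProbabilityMeasure (Measure.map (· * g) μ) :=
    Measure.isProbabilityMeasure_map (by fun_prop)
  exact Measure.isHaarMeasure_eq_of_isProbabilityMeasure _ _

lemma integral_mul_right {n : ℕ} (μ : Measure (UG n)) [μ.IsHaarMeasure] [IsProbabilityMeasure μ]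
    (g : UG n) (f : UG n → ℝ) (hf : Continuous f) : ∫ U, f (U * g) ∂μ = ∫ U, f U ∂μ := by
  conv_rhs => rw [← map_mul_right μ g]
  rw [integral_map (by fun_prop) hf.aestronglyMeasurable]

lemma integrable_cont {n : ℕ} (μ : Measure (UG n)) [IsProbabilityMeasure μ]
    {f : UG n → ℝ} (hf : Continuous f) : Integrable f μ := by
  have := hf.continuousOn (s := Set.univ) |>.integrableOn_compact (μ := μ) isCompact_univ
  simpa using this

lemma hasDerivAt_int {n : ℕ} (μ : Measure (UG n)) [IsProbabilityMeasure μ]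
    (F F' : ℝ → UG n → ℝ) (hF : ∀ t, Continuous (F t)) (hF' : Continuous (Function.uncurry F'))
    (hd : ∀ t U, HasDerivAt (fun s => F s U) (F' t U) t) (t₀ : ℝ) :
    HasDerivAt (fun t => ∫ U, F t U ∂μ) (∫ U, F' t₀ U ∂μ) t₀ := by
  have hK : IsCompact (Metric.closedBall t₀ 1 ×ˢ (Set.univ : Set (UG n))) :=
    (isCompact_closedBall _ _).prod isCompact_univ
  obtain ⟨C, hC⟩ := hK.exists_bound_of_continuousOn hF'.continuousOn
  have hF't : Continuous (F' t₀) := hF'.comp (Continuous.prodMk_right t₀)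
  refine (hasDerivAt_integral_of_dominated_loc_of_deriv_le (s := Metric.closedBall t₀ 1)
    (bound := fun _ => C) (Metric.closedBall_mem_nhds _ one_pos)
    (Filter.Eventually.of_forall fun t => (hF t).aestronglyMeasurable)
    (integrable_cont μ (hF t₀)) hF't.aestronglyMeasurable ?_ (integrable_const _) ?_).2
  · exact Filter.Eventually.of_forall fun U t ht => hC (t, U) ⟨ht, trivial⟩
  · exact Filter.Eventually.of_forall fun U t _ => hd t U

/-- The exponent. -/
noncomputable def S {n : ℕ} (x y : Fin n → ℝ) (U : Matrix (Fin n) (Fin n) ℂ) : ℝ :=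
  ∑ k, ∑ m, x k * y m * ‖U k m‖ ^ 2

lemma trace_eq {n : ℕ} (x y : Fin n → ℝ) (U : UG n) :
    (Matrix.trace (Matrix.diagonal (fun l => (x l : ℂ)) *
        (U : Matrix (Fin n) (Fin n) ℂ) * Matrix.diagonal (fun l => (y l : ℂ)) *
        ((U⁻¹ : UG n) : Matrix (Fin n) (Fin n) ℂ))).re = S x y U := by
  have h : ((U⁻¹ : UG n) : Matrix (Fin n) (Fin n) ℂ) = (U : Matrix (Fin n) (Fin n) ℂ)ᴴ := rfl
  rw [h]
  simp only [Matrix.trace, Matrix.diag, Matrix.mul_apply (N := Matrix.conjTranspose _),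
    Matrix.mul_diagonal, Matrix.diagonal_mul, Matrix.conjTranspose_apply, Complex.re_sum, S]
  refine Finset.sum_congr rfl fun k _ => Finset.sum_congr rfl fun m _ => ?_
  rw [← Complex.normSq_eq_norm_sq, Complex.normSq_apply]
  simp
  ring

lemma Mmom_eq {n : ℕ} (μ : Measure (UG n)) (x y : Fin n → ℝ) (i j : Fin n) :
    Mmom n μ x y i j = ∫ U : UG n, ‖(U : Matrix (Fin n) (Fin n) ℂ) i j‖ ^ 2 *
      Real.exp (S x y (U : Matrix (Fin n) (Fin n) ℂ)) ∂μ := by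
  unfold Mmom
  simp only [trace_eq]

lemma cont_entry {n : ℕ} (i j : Fin n) :
    Continuous fun U : UG n => (U : Matrix (Fin n) (Fin n) ℂ) i j :=
  continuous_subtype_val.matrix_elem i j

lemma cont_S {n : ℕ} (x y : Fin n → ℝ) :
    Continuous fun U : UG n => S x y (U : Matrix (Fin n) (Fin n) ℂ) := by
  unfold S
  exact continuous_finsetSum _ fun k _ => continuous_finsetSum _ fun m _ =>
    continuous_const.mul ((cont_entry k m).norm.pow 2)

lemma cont_q {n : ℕ} (x : Fin n → ℝ) (j : Fin n) :
    Continuous fun U : UG n => ∑ k, x k * ‖(U : Matrix (Fin n) (Fin n) ℂ) k j‖ ^ 2 :=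
  continuous_finsetSum _ fun k _ => continuous_const.mul ((cont_entry k j).norm.pow 2)

lemma S_update {n : ℕ} (x y : Fin n → ℝ) (j : Fin n) (t : ℝ) (U : Matrix (Fin n) (Fin n) ℂ) :
    S x (Function.update y j t) U = S x y U + (t - y j) * ∑ k, x k * ‖U k j‖ ^ 2 := by
  have h : ∀ k, ∑ m, x k * Function.update y j t m * ‖U k m‖ ^ 2
      = ∑ m, x k * y m * ‖U k m‖ ^ 2 + (t - y j) * (x k * ‖U k j‖ ^ 2) := by
    intro k
    rw [← Finset.add_sum_erase _ _ (Finset.mem_univ j),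
      ← Finset.add_sum_erase _ (fun m => x k * y m * ‖U k m‖ ^ 2) (Finset.mem_univ j)]
    rw [Finset.sum_congr rfl (g := fun m => x k * y m * ‖U k m‖ ^ 2)]
    · simp; ring
    · intro m hm
      rw [Function.update_of_ne (Finset.ne_of_mem_erase hm)]
  simp only [S, h, Finset.sum_add_distrib, Finset.mul_sum]

lemma deriv_aux {n : ℕ} (μ : Measure (UG n)) [IsProbabilityMeasure μ]
    (p s q : UG n → ℝ) (hp : Continuous p) (hs : Continuous s) (hq : Continuous q) (t₀ : ℝ) :
    HasDerivAt (fun t => ∫ U, p U * Real.exp (s U + (t - t₀) * q U) ∂μ)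
      (∫ U, p U * q U * Real.exp (s U) ∂μ) t₀ := by
  have := hasDerivAt_int μ (fun t U => p U * Real.exp (s U + (t - t₀) * q U))
    (fun t U => p U * q U * Real.exp (s U + (t - t₀) * q U))
    (fun t => by fun_prop) (by simp only [Function.uncurry_def]; fun_prop) ?_ t₀
  · simpa only [sub_self, zero_mul, add_zero] using this
  · intro t U
    have h1 : HasDerivAt (fun r : ℝ => s U + (r - t₀) * q U) (q U) t := by
      simpa using (((hasDerivAt_id t).sub_const t₀).mul_const (q U)).const_add (s U)
    exact (h1.exp.const_mul (p U)).congr_deriv (by ring)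

lemma deriv_Mmom {n : ℕ} (μ : Measure (UG n)) [IsProbabilityMeasure μ]
    (x y : Fin n → ℝ) (i j : Fin n) :
    HasDerivAt (fun t => Mmom n μ x (Function.update y j t) i j)
      (∫ U : UG n, ‖(U : Matrix (Fin n) (Fin n) ℂ) i j‖ ^ 2 *
        (∑ k, x k * ‖(U : Matrix (Fin n) (Fin n) ℂ) k j‖ ^ 2) *
        Real.exp (S x y (U : Matrix (Fin n) (Fin n) ℂ)) ∂μ) (y j) := by
  have hp : Continuous fun U : UG n => ‖(U : Matrix (Fin n) (Fin n) ℂ) i j‖ ^ 2 :=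
    (cont_entry i j).norm.pow 2
  have hS := cont_S x y
  have hq := cont_q x j
  simp only [Mmom_eq, S_update]
  exact deriv_aux μ _ _ _ hp hS hq (y j)

lemma exp_mem {n : ℕ} (A : Matrix (Fin n) (Fin n) ℂ) (hA : Aᴴ = -A) :
    NormedSpace.exp A ∈ Matrix.unitaryGroup (Fin n) ℂ := by
  rw [Matrix.mem_unitaryGroup_iff, Matrix.star_eq_conjTranspose, ← Matrix.exp_conjTranspose, hA,
    ← Matrix.exp_add_of_commute _ _ (Commute.refl A).neg_right]
  simp

section expo

attribute [local instance] Matrix.linftyOpNormedRing Matrix.linftyOpNormedAlgebra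

lemma exists_flow {n : ℕ} (A : Matrix (Fin n) (Fin n) ℂ) (hA : Aᴴ = -A) :
    ∃ R : ℝ → UG n, Continuous R ∧ R 0 = 1 ∧ ∀ (U : UG n) (t : ℝ) (a b : Fin n),
      HasDerivAt (fun s => ((U * R s : UG n) : Matrix (Fin n) (Fin n) ℂ) a b)
        ((((U * R t : UG n) : Matrix (Fin n) (Fin n) ℂ) * A) a b) t := by
  have hmem : ∀ t : ℝ, NormedSpace.exp (t • A) ∈ Matrix.unitaryGroup (Fin n) ℂ := fun t => by
    refine exp_mem _ ?_
    rw [Matrix.conjTranspose_smul, hA]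
    simp
  refine ⟨fun t => ⟨NormedSpace.exp (t • A), hmem t⟩, ?_, ?_, ?_⟩
  · refine Continuous.subtype_mk ?_ _
    refine continuous_iff_continuousAt.2 fun t => (hasDerivAt_exp_smul_const (𝕂 := ℝ) A t).continuousAt
  · ext; simp
  · intro U t a b
    have h := (hasDerivAt_exp_smul_const (𝕂 := ℝ) A t).const_mul (U : Matrix (Fin n) (Fin n) ℂ)
    let L : Matrix (Fin n) (Fin n) ℂ →ₗ[ℝ] ℂ :=
      { toFun := fun M => M a b, map_add' := fun _ _ => rfl, map_smul' := fun _ _ => rfl }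
    have h2 := (LinearMap.toContinuousLinearMap L).hasFDerivAt.comp_hasDerivAt t h
    rw [← mul_assoc] at h2
    exact h2

end expo

lemma ibp {n : ℕ} (μ : Measure (UG n)) [μ.IsHaarMeasure] [IsProbabilityMeasure μ]
    (R : ℝ → UG n) (hR : Continuous R) (hR0 : R 0 = 1) (f g : UG n → ℝ) (hf : Continuous f)
    (hg : Continuous g) (hd : ∀ U t, HasDerivAt (fun s => f (U * R s)) (g (U * R t)) t) :
    ∫ U, g U ∂μ = 0 := by
  have h := hasDerivAt_int μ (fun t U => f (U * R t)) (fun t U => g (U * R t))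
    (fun t => by fun_prop) (by simp only [Function.uncurry_def]; fun_prop) (fun t U => hd U t) 0
  simp only [integral_mul_right μ _ f hf, hR0, mul_one] at h
  exact h.unique (hasDerivAt_const _ _)

/-- Generator of the rotation mixing columns `j` and `l`. -/
noncomputable def gen {n : ℕ} (c : ℂ) (j l : Fin n) : Matrix (Fin n) (Fin n) ℂ :=
  Matrix.single l j c - Matrix.single j l (starRingEnd ℂ c)

lemma gen_skew {n : ℕ} (c : ℂ) (j l : Fin n) : (gen c j l)ᴴ = -gen c j l := by
  simp [gen, Matrix.conjTranspose_sub, Matrix.conjTranspose_single]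

lemma mul_gen {n : ℕ} (c : ℂ) (j l : Fin n) (W : Matrix (Fin n) (Fin n) ℂ) (k m : Fin n) :
    (W * gen c j l) k m = (if m = j then W k l * c else 0) -
      (if m = l then W k j * starRingEnd ℂ c else 0) := by
  rw [gen, Matrix.mul_sub, Matrix.sub_apply]
  congr 1
  · split_ifs with h
    · subst h; simp
    · simp [h]
  · split_ifs with h
    · subst h; simp
    · simp [h]

lemma deriv_S {n : ℕ} (c : ℂ) (j l : Fin n) (x y : Fin n → ℝ)
    (W : ℝ → Matrix (Fin n) (Fin n) ℂ) (t : ℝ)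
    (hW : ∀ a b, HasDerivAt (fun s => W s a b) ((W t * gen c j l) a b) t) :
    HasDerivAt (fun s => S x y (W s))
      ((y j - y l) * (2 * ∑ k, x k * (c * W t k l * starRingEnd ℂ (W t k j)).re)) t := by
  have h : HasDerivAt (fun s => S x y (W s)) (∑ k, ∑ m, x k * y m *
      (2 * (starRingEnd ℂ (W t k m) * (W t * gen c j l) k m).re)) t := by
    unfold S
    refine HasDerivAt.fun_sum fun k _ => HasDerivAt.fun_sum fun m _ => ?_
    refine HasDerivAt.const_mul _ ?_
    have := (hW k m).norm_sq
    rw [Complex.inner, mul_comm ((W t * gen c j l) k m)] at this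
    exact this
  refine h.congr_deriv ?_
  rw [Finset.mul_sum, Finset.mul_sum]
  refine Finset.sum_congr rfl fun k _ => ?_
  simp only [mul_gen, mul_sub, Complex.sub_re, Finset.sum_sub_distrib]
  have e1 : ∀ (z : Fin n → ℂ) (w : ℂ) (p : Fin n), ∑ m, x k * y m * (2 *
      (z m * (if m = p then w else 0)).re) = x k * y p * (2 * (z p * w).re) := by
    intro z w p
    rw [Finset.sum_eq_single p]
    · simp
    · intro b _ hb; simp [hb]
    · simp
  rw [e1 (fun m => starRingEnd ℂ (W t k m)), e1 (fun m => starRingEnd ℂ (W t k m))]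
  simp
  ring

lemma key_c {n : ℕ} (μ : Measure (UG n)) [μ.IsHaarMeasure] [IsProbabilityMeasure μ]
    (x y : Fin n → ℝ) (i j l : Fin n) (hjl : j ≠ l) (c : ℂ) (hc : starRingEnd ℂ c * c = 1) :
    ∫ U : UG n, ((‖U.1 i l‖ ^ 2 - ‖U.1 i j‖ ^ 2) +
      (starRingEnd ℂ c * U.1 i j * starRingEnd ℂ (U.1 i l)).re *
       ((y j - y l) * (2 * ∑ k, x k * (c * U.1 k l * starRingEnd ℂ (U.1 k j)).re))) *
      Real.exp (S x y U.1) ∂μ = 0 := by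
  obtain ⟨R, hR, hR0, hd⟩ := exists_flow (gen c j l) (gen_skew c j l)
  have ce := cont_entry (n := n)
  have hS := cont_S x y
  have hconj : ∀ a b, Continuous fun U : UG n => starRingEnd ℂ (U.1 a b) :=
    fun a b => Complex.continuous_conj.comp (ce a b)
  have ha : Continuous fun U : UG n =>
      (starRingEnd ℂ c * U.1 i j * starRingEnd ℂ (U.1 i l)).re :=
    Complex.continuous_re.comp ((continuous_const.mul (ce i j)).mul (hconj i l))
  have hb : Continuous fun U : UG n =>
      ∑ k, x k * (c * U.1 k l * starRingEnd ℂ (U.1 k j)).re :=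
    continuous_finsetSum _ fun k _ => continuous_const.mul
      (Complex.continuous_re.comp ((continuous_const.mul (ce k l)).mul (hconj k j)))
  refine ibp μ R hR hR0 (fun U => (starRingEnd ℂ c * U.1 i j * starRingEnd ℂ (U.1 i l)).re *
    Real.exp (S x y U.1)) _ (ha.mul hS.rexp) ?_ ?_
  · exact ((((ce i l).norm.pow 2).sub ((ce i j).norm.pow 2)).add
      (ha.mul (continuous_const.mul (continuous_const.mul hb)))).mul hS.rexp
  · intro U t
    have h1 := deriv_S c j l x y (fun s => (U * R s).1) t (hd U t)
    have h2 := ((hd U t i j).const_mul (starRingEnd ℂ c)).mul (hd U t i l).star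
    have h3 := Complex.reCLM.hasFDerivAt.comp_hasDerivAt t h2
    have h4 := h3.mul h1.exp
    refine HasDerivAt.congr_deriv h4 ?_
    simp only [Function.comp, Pi.mul_apply]
    generalize (U * R t).1 = W
    simp only [Complex.reCLM_apply, mul_gen, if_true, hjl, hjl.symm, if_false]
    have e : (starRingEnd ℂ c * (W i l * c - 0) * star (W i l) +
        starRingEnd ℂ c * W i j * star (0 - W i j * starRingEnd ℂ c)).re
        = ‖W i l‖ ^ 2 - ‖W i j‖ ^ 2 := by
      have : starRingEnd ℂ c * (W i l * c - 0) * star (W i l) +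
        starRingEnd ℂ c * W i j * star (0 - W i j * starRingEnd ℂ c)
        = (starRingEnd ℂ c * c) * (W i l * starRingEnd ℂ (W i l) -
          W i j * starRingEnd ℂ (W i j)) := by
        simp
        ring
      rw [this, hc, one_mul, Complex.mul_conj, Complex.mul_conj, Complex.normSq_eq_norm_sq,
        Complex.normSq_eq_norm_sq, Complex.sub_re, Complex.ofReal_re, Complex.ofReal_re]
    rw [e]
    simp only [starRingEnd_apply]
    ring

lemma key {n : ℕ} (μ : Measure (UG n)) [μ.IsHaarMeasure] [IsProbabilityMeasure μ]
    (x y : Fin n → ℝ) (i j l : Fin n) (hjl : j ≠ l) :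
    Mmom n μ x y i l - Mmom n μ x y i j = (y l - y j) *
    ∫ U : UG n, (U.1 i j * starRingEnd ℂ (U.1 i l) *
       ∑ k, x k * (U.1 k l * starRingEnd ℂ (U.1 k j))).re * Real.exp (S x y U.1) ∂μ := by
  have ce := cont_entry (n := n)
  have hS := cont_S x y
  have hconj : ∀ a b, Continuous fun U : UG n => starRingEnd ℂ (U.1 a b) :=
    fun a b => Complex.continuous_conj.comp (ce a b)
  have ha : ∀ c : ℂ, Continuous fun U : UG n =>
      (starRingEnd ℂ c * U.1 i j * starRingEnd ℂ (U.1 i l)).re := fun c =>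
    Complex.continuous_re.comp ((continuous_const.mul (ce i j)).mul (hconj i l))
  have hb : ∀ c : ℂ, Continuous fun U : UG n =>
      ∑ k, x k * (c * U.1 k l * starRingEnd ℂ (U.1 k j)).re := fun c =>
    continuous_finsetSum _ fun k _ => continuous_const.mul
      (Complex.continuous_re.comp ((continuous_const.mul (ce k l)).mul (hconj k j)))
  have hcont : ∀ c : ℂ, Continuous fun U : UG n => ((‖U.1 i l‖ ^ 2 - ‖U.1 i j‖ ^ 2) +
      (starRingEnd ℂ c * U.1 i j * starRingEnd ℂ (U.1 i l)).re *
       ((y j - y l) * (2 * ∑ k, x k * (c * U.1 k l * starRingEnd ℂ (U.1 k j)).re))) *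
      Real.exp (S x y U.1) := fun c =>
    ((((ce i l).norm.pow 2).sub ((ce i j).norm.pow 2)).add
      ((ha c).mul (continuous_const.mul (continuous_const.mul (hb c))))).mul hS.rexp
  have k1 := key_c μ x y i j l hjl 1 (by simp)
  have k2 := key_c μ x y i j l hjl Complex.I (by simp)
  have hI : ∀ a b, Integrable (fun U : UG n => ‖U.1 a b‖ ^ 2 * Real.exp (S x y U.1)) μ :=
    fun a b => integrable_cont μ (((ce a b).norm.pow 2).mul hS.rexp)
  have h0 := integral_add (integrable_cont μ (hcont 1)) (integrable_cont μ (hcont Complex.I))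
  rw [k1, k2, add_zero] at h0
  have hq : Continuous fun U : UG n => (U.1 i j * starRingEnd ℂ (U.1 i l) *
       ∑ k, x k * (U.1 k l * starRingEnd ℂ (U.1 k j))).re * Real.exp (S x y U.1) :=
    (Complex.continuous_re.comp (((ce i j).mul (hconj i l)).mul
      (continuous_finsetSum _ fun k _ => continuous_const.mul
        ((ce k l).mul (hconj k j))))).mul hS.rexp
  have h1 : ∫ U : UG n, 2 * ((‖U.1 i l‖ ^ 2 * Real.exp (S x y U.1) -
      ‖U.1 i j‖ ^ 2 * Real.exp (S x y U.1)) - (y l - y j) * ((U.1 i j * starRingEnd ℂ (U.1 i l) *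
       ∑ k, x k * (U.1 k l * starRingEnd ℂ (U.1 k j))).re * Real.exp (S x y U.1))) ∂μ = 0 := by
    rw [← h0]
    refine integral_congr_ae (Filter.Eventually.of_forall fun U => ?_)
    dsimp only
    have e : (U.1 i j * starRingEnd ℂ (U.1 i l) *
        ∑ k, x k * (U.1 k l * starRingEnd ℂ (U.1 k j))).re =
        (starRingEnd ℂ 1 * U.1 i j * starRingEnd ℂ (U.1 i l)).re *
          ∑ k, x k * (1 * U.1 k l * starRingEnd ℂ (U.1 k j)).re +
        (starRingEnd ℂ Complex.I * U.1 i j * starRingEnd ℂ (U.1 i l)).re *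
          ∑ k, x k * (Complex.I * U.1 k l * starRingEnd ℂ (U.1 k j)).re := by
      simp only [Finset.mul_sum, Complex.re_sum, ← Finset.sum_add_distrib]
      refine Finset.sum_congr rfl fun k _ => ?_
      simp
      ring
    rw [e]
    ring
  rw [integral_const_mul, integral_sub (by exact (hI i l).sub (hI i j))
    ((integrable_cont μ hq).const_mul _), integral_sub (hI i l) (hI i j), integral_const_mul] at h1
  rw [Mmom_eq, Mmom_eq]
  linarith

lemma sum_pointwise {n : ℕ} (x : Fin n → ℝ) (i j : Fin n) (U : UG n) :
    ∑ l ∈ Finset.univ.erase j, (U.1 i j * starRingEnd ℂ (U.1 i l) *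
       ∑ k, x k * (U.1 k l * starRingEnd ℂ (U.1 k j))).re =
    x i * ‖U.1 i j‖ ^ 2 - ‖U.1 i j‖ ^ 2 * ∑ k, x k * ‖U.1 k j‖ ^ 2 := by
  have hU : ∀ k, ∑ l, U.1 k l * starRingEnd ℂ (U.1 i l) = if k = i then 1 else 0 := by
    intro k
    have := congrFun (congrFun (Matrix.mem_unitaryGroup_iff.1 U.2) k) i
    rw [Matrix.mul_apply, Matrix.one_apply] at this
    exact this
  have hn : ∀ z : ℂ, z * starRingEnd ℂ z = ((‖z‖ ^ 2 : ℝ) : ℂ) := fun z => by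
    rw [Complex.mul_conj, Complex.normSq_eq_norm_sq]
  have hall : ∑ l, (U.1 i j * starRingEnd ℂ (U.1 i l) *
       ∑ k, x k * (U.1 k l * starRingEnd ℂ (U.1 k j))) = ((x i * ‖U.1 i j‖ ^ 2 : ℝ) : ℂ) := by
    calc _ = ∑ k, x k * U.1 i j * starRingEnd ℂ (U.1 k j) *
            ∑ l, U.1 k l * starRingEnd ℂ (U.1 i l) := by
          simp only [Finset.mul_sum]
          rw [Finset.sum_comm]
          refine Finset.sum_congr rfl fun k _ => Finset.sum_congr rfl fun l _ => ?_
          ring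
      _ = _ := by
          simp only [hU]
          simp only [mul_ite, mul_one, mul_zero, Finset.sum_ite_eq', Finset.mem_univ, if_true]
          rw [mul_assoc, hn, ← Complex.ofReal_mul]
  have hj : (U.1 i j * starRingEnd ℂ (U.1 i j) *
       ∑ k, x k * (U.1 k j * starRingEnd ℂ (U.1 k j))) =
       ((‖U.1 i j‖ ^ 2 * ∑ k, x k * ‖U.1 k j‖ ^ 2 : ℝ) : ℂ) := by
    simp only [hn]
    push_cast
    rfl
  rw [← Complex.re_sum, Finset.sum_erase_eq_sub (Finset.mem_univ j), hall, hj, Complex.sub_re,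
    Complex.ofReal_re, Complex.ofReal_re]

end DunklUnitary

/-- Dunkl-type linear equation for the quadratic moments, `β = 1`:
for the Haar probability measure `μ` on `U(n)`, real `x` and `y` with the `y` entries
pairwise distinct, the function `y_j ↦ M_{i,j}` is differentiable and
`∂M_{i,j}/∂y_j + Σ_{l≠j} (M_{i,l} − M_{i,j})/(y_l − y_j) = x_i M_{i,j}`. -/
theorem statement12 (n : ℕ) (hn : 1 ≤ n) (μ : Measure (Matrix.unitaryGroup (Fin n) ℂ))
    [μ.IsHaarMeasure] [IsProbabilityMeasure μ] (x y : Fin n → ℝ)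
    (hy : ∀ i j : Fin n, i ≠ j → y i ≠ y j) (i j : Fin n) :
    HasDerivAt (fun t => Mmom n μ x (Function.update y j t) i j)
      (x i * Mmom n μ x y i j -
        ∑ l ∈ Finset.univ.erase j, (Mmom n μ x y i l - Mmom n μ x y i j) / (y l - y j))
      (y j) := by
  refine (DunklUnitary.deriv_Mmom μ x y i j).congr_deriv ?_
  have ce := DunklUnitary.cont_entry (n := n)
  have hS := DunklUnitary.cont_S x y
  have hconj : ∀ a b, Continuous fun U : DunklUnitary.UG n => starRingEnd ℂ (U.1 a b) :=
    fun a b => Complex.continuous_conj.comp (ce a b)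
  have hq : ∀ l, Continuous fun U : DunklUnitary.UG n => (U.1 i j * starRingEnd ℂ (U.1 i l) *
       ∑ k, x k * (U.1 k l * starRingEnd ℂ (U.1 k j))).re *
         Real.exp (DunklUnitary.S x y U.1) := fun l =>
    (Complex.continuous_re.comp (((ce i j).mul (hconj i l)).mul
      (continuous_finsetSum _ fun k _ => continuous_const.mul
        ((ce k l).mul (hconj k j))))).mul hS.rexp
  have h1 : ∀ l ∈ Finset.univ.erase j,
      (Mmom n μ x y i l - Mmom n μ x y i j) / (y l - y j) =
      ∫ U : DunklUnitary.UG n, (U.1 i j * starRingEnd ℂ (U.1 i l) *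
       ∑ k, x k * (U.1 k l * starRingEnd ℂ (U.1 k j))).re *
         Real.exp (DunklUnitary.S x y U.1) ∂μ := by
    intro l hl
    have hne := Finset.ne_of_mem_erase hl
    rw [DunklUnitary.key μ x y i j l hne.symm, mul_div_cancel_left₀]
    exact sub_ne_zero.2 (hy l j hne)
  rw [Finset.sum_congr rfl h1, ← integral_finsetSum _
    (fun l _ => DunklUnitary.integrable_cont μ (hq l)), DunklUnitary.Mmom_eq,
    ← integral_const_mul, ← integral_sub]
  · refine integral_congr_ae (Filter.Eventually.of_forall fun U => ?_)
    dsimp only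
    rw [← Finset.sum_mul, DunklUnitary.sum_pointwise]
    ring
  · exact DunklUnitary.integrable_cont μ
      (continuous_const.mul (((ce i j).norm.pow 2).mul hS.rexp))
  · exact DunklUnitary.integrable_cont μ (continuous_finsetSum _ fun l _ => hq l)
end

section
/- Let n ≥ 1, let μ be the Haar probability measure on the unitary group U(n) of n×n complex matrices, and let y = (y₁,…,y_n) ∈ ℝⁿ. Define I(x) = ∫_{U(n)} exp(Re tr(X U Y U⁻¹)) dμ(U) for x = (x₁,…,x_n) ∈ ℝⁿ, where X = diag(x₁,…,x_n) and Y = diag(y₁,…,y_n). Then I is smooth, and at every point x with pairwise distinct entries it satisfies the Calogero equation: Σ_{i=1}^{n} ∂²I/∂x_i² + Σ_{i≠j} (1/(x_i−x_j)) (∂I/∂x_i − ∂I/∂x_j) = (Σ_{j=1}^{n} y_j²) · I(x). -/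
open MeasureTheory Matrix Finset Function

/-- The angular integral `I(x) = ∫_{U(n)} e^{Re tr(X U Y U⁻¹)} dμ(U)` with
`X = diag x`, `Y = diag y`. -/
noncomputable def angInt (n : ℕ) (μ : Measure (Matrix.unitaryGroup (Fin n) ℂ))
    (y : Fin n → ℝ) (x : Fin n → ℝ) : ℝ :=
  ∫ U : Matrix.unitaryGroup (Fin n) ℂ,
    Real.exp ((Matrix.trace (Matrix.diagonal (fun l => (x l : ℂ)) *
      (U : Matrix (Fin n) (Fin n) ℂ) * Matrix.diagonal (fun l => (y l : ℂ)) *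
      ((U⁻¹ : Matrix.unitaryGroup (Fin n) ℂ) : Matrix (Fin n) (Fin n) ℂ))).re) ∂μ


namespace CalogeroAux

instance borelMat {n : ℕ} : BorelSpace (Matrix (Fin n) (Fin n) ℂ) :=
  inferInstanceAs (BorelSpace (Fin n → Fin n → ℂ))

instance borelU {n : ℕ} : BorelSpace (Matrix.unitaryGroup (Fin n) ℂ) :=
  Subtype.borelSpace _

instance sctMat {n : ℕ} : SecondCountableTopology (Matrix (Fin n) (Fin n) ℂ) :=
  inferInstanceAs (SecondCountableTopology (Fin n → Fin n → ℂ))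

instance compactU {n : ℕ} : CompactSpace (Matrix.unitaryGroup (Fin n) ℂ) := by
  have hK : IsCompact (Set.pi Set.univ fun _ : Fin n => Set.pi Set.univ
      fun _ : Fin n => Metric.closedBall (0 : ℂ) 1) :=
    isCompact_univ_pi fun _ => isCompact_univ_pi fun _ => isCompact_closedBall _ _
  have hc : IsClosed ((Matrix.unitaryGroup (Fin n) ℂ : Set (Matrix (Fin n) (Fin n) ℂ))) := by
    have : ((Matrix.unitaryGroup (Fin n) ℂ : Set (Matrix (Fin n) (Fin n) ℂ))) =
        {A | A * star A = 1} := by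
      ext A
      exact Matrix.mem_unitaryGroup_iff
    rw [this]
    exact isClosed_eq (by fun_prop) continuous_const
  have : IsCompact ((Matrix.unitaryGroup (Fin n) ℂ : Set (Matrix (Fin n) (Fin n) ℂ))) := by
    refine IsCompact.of_isClosed_subset (X := Fin n → Fin n → ℂ) hK hc ?_
    intro A hA i _ j _
    simpa using entry_norm_bound_of_unitary hA i j
  exact isCompact_iff_compactSpace.mp this

variable {n : ℕ}

/-- `M(U) = U Y U⁻¹`. -/
noncomputable def conjM (y : Fin n → ℝ) (U : Matrix.unitaryGroup (Fin n) ℂ) :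
    Matrix (Fin n) (Fin n) ℂ :=
  (U : Matrix (Fin n) (Fin n) ℂ) * Matrix.diagonal (fun l => (y l : ℂ)) *
    ((U⁻¹ : Matrix.unitaryGroup (Fin n) ℂ) : Matrix (Fin n) (Fin n) ℂ)

theorem coe_inv_eq (U : Matrix.unitaryGroup (Fin n) ℂ) :
    ((U⁻¹ : Matrix.unitaryGroup (Fin n) ℂ) : Matrix (Fin n) (Fin n) ℂ) =
      (U : Matrix (Fin n) (Fin n) ℂ)ᴴ := rfl

theorem conjM_continuous (y : Fin n → ℝ) : Continuous (conjM y) := by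
  unfold conjM
  simp only [coe_inv_eq]
  fun_prop

theorem conjM_mul (y : Fin n → ℝ) (V U : Matrix.unitaryGroup (Fin n) ℂ) :
    conjM y (V * U) = (V : Matrix (Fin n) (Fin n) ℂ) * conjM y U *
      (V : Matrix (Fin n) (Fin n) ℂ)ᴴ := by
  simp only [conjM, coe_inv_eq, Submonoid.coe_mul, conjTranspose_mul, Matrix.mul_assoc]

theorem conjM_herm (y : Fin n → ℝ) (U : Matrix.unitaryGroup (Fin n) ℂ) :
    (conjM y U)ᴴ = conjM y U := by
  simp only [conjM, coe_inv_eq, conjTranspose_mul, conjTranspose_conjTranspose,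
    diagonal_conjTranspose, Matrix.mul_assoc]
  congr 3
  ext l
  simp

theorem conjM_symm (y : Fin n → ℝ) (U : Matrix.unitaryGroup (Fin n) ℂ) (i j : Fin n) :
    conjM y U j i = star (conjM y U i j) := by
  conv_lhs => rw [← conjM_herm y U]
  rfl

theorem conjM_sq (y : Fin n → ℝ) (U : Matrix.unitaryGroup (Fin n) ℂ) :
    ∑ i, ∑ j, ((conjM y U i j).re ^ 2 + (conjM y U i j).im ^ 2) = ∑ j, y j ^ 2 := by
  have hU : (U : Matrix (Fin n) (Fin n) ℂ)ᴴ * (U : Matrix (Fin n) (Fin n) ℂ) = 1 :=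
    Matrix.mem_unitaryGroup_iff'.mp U.2
  have h1 : (conjM y U * conjM y U).trace = ∑ j, (y j : ℂ) ^ 2 := by
    have : conjM y U * conjM y U = (U : Matrix (Fin n) (Fin n) ℂ) *
        (Matrix.diagonal (fun l => (y l : ℂ)) * Matrix.diagonal (fun l => (y l : ℂ)) *
        (U : Matrix (Fin n) (Fin n) ℂ)ᴴ) := by
      simp only [conjM, coe_inv_eq, Matrix.mul_assoc]
      rw [← Matrix.mul_assoc _ (U : Matrix (Fin n) (Fin n) ℂ), hU, Matrix.one_mul]
    rw [this, Matrix.trace_mul_comm, Matrix.mul_assoc, hU, Matrix.mul_one, diagonal_mul_diagonal,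
      trace_diagonal]
    simp [sq]
  have h2 : (conjM y U * conjM y U).trace =
      ((∑ i, ∑ j, ((conjM y U i j).re ^ 2 + (conjM y U i j).im ^ 2) : ℝ) : ℂ) := by
    simp only [Matrix.trace, Matrix.diag, Matrix.mul_apply]
    push_cast
    refine Finset.sum_congr rfl fun i _ => Finset.sum_congr rfl fun j _ => ?_
    rw [conjM_symm y U i j]
    apply Complex.ext <;> simp [sq] <;> ring
  rw [h1] at h2
  exact_mod_cast h2.symm

/-- Real part of an entry, as a continuous function. -/
noncomputable def mRe (y : Fin n → ℝ) (i j : Fin n) : C(Matrix.unitaryGroup (Fin n) ℂ, ℝ) :=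
  ⟨fun U => (conjM y U i j).re,
    Complex.continuous_re.comp ((conjM_continuous y).matrix_elem i j)⟩

/-- Imaginary part of an entry, as a continuous function. -/
noncomputable def mIm (y : Fin n → ℝ) (i j : Fin n) : C(Matrix.unitaryGroup (Fin n) ℂ, ℝ) :=
  ⟨fun U => (conjM y U i j).im,
    Complex.continuous_im.comp ((conjM_continuous y).matrix_elem i j)⟩

/-- The exponent. -/
noncomputable def expo (y x : Fin n → ℝ) : C(Matrix.unitaryGroup (Fin n) ℂ, ℝ) :=
  ∑ k, x k • mRe y k k

theorem exp_apply {K : Type*} [TopologicalSpace K] [CompactSpace K] (f : C(K, ℝ)) (k : K) :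
    (NormedSpace.exp f) k = Real.exp (f k) := by
  rw [Real.exp_eq_exp_ℝ]
  exact NormedSpace.map_exp (ContinuousMap.evalAlgHom ℝ ℝ k) (continuous_eval_const k) f

/-- Integration as a continuous linear functional. -/
noncomputable def lam {K : Type*} [TopologicalSpace K] [CompactSpace K] [MeasurableSpace K]
    [BorelSpace K] (μ : Measure K) [IsProbabilityMeasure μ] : C(K, ℝ) →L[ℝ] ℝ :=
  LinearMap.mkContinuous
    { toFun := fun f => ∫ k, f k ∂μ
      map_add' := fun f g => integral_add
        (f.continuous.integrable_of_hasCompactSupport (HasCompactSupport.of_compactSpace _))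
        (g.continuous.integrable_of_hasCompactSupport (HasCompactSupport.of_compactSpace _))
      map_smul' := fun c f => integral_const_mul c _ } 1 (by
    intro f
    have := norm_integral_le_of_norm_le_const (μ := μ) (f := f) (C := ‖f‖)
      (Filter.Eventually.of_forall fun k => f.norm_coe_le_norm k)
    simpa using this)

theorem lam_apply {K : Type*} [TopologicalSpace K] [CompactSpace K] [MeasurableSpace K]
    [BorelSpace K] (μ : Measure K) [IsProbabilityMeasure μ] (f : C(K, ℝ)) :
    lam μ f = ∫ k, f k ∂μ := rfl

theorem expo_apply (y x : Fin n → ℝ) (U : Matrix.unitaryGroup (Fin n) ℂ) :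
    expo y x U = ∑ k, x k * (conjM y U k k).re := by
  simp [expo, mRe, ContinuousMap.sum_apply]

variable (μ : Measure (Matrix.unitaryGroup (Fin n) ℂ))

theorem angInt_eq [IsProbabilityMeasure μ] (y x : Fin n → ℝ) :
    angInt n μ y x = lam μ (NormedSpace.exp (expo y x)) := by
  rw [lam_apply, angInt]
  refine integral_congr_ae (Filter.Eventually.of_forall fun U => ?_)
  simp only [exp_apply, expo_apply]
  congr 1
  have : (Matrix.diagonal (fun l => (x l : ℂ)) *
      (U : Matrix (Fin n) (Fin n) ℂ) * Matrix.diagonal (fun l => (y l : ℂ)) *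
      ((U⁻¹ : Matrix.unitaryGroup (Fin n) ℂ) : Matrix (Fin n) (Fin n) ℂ)) =
      Matrix.diagonal (fun l => (x l : ℂ)) * conjM y U := by
    simp only [conjM, Matrix.mul_assoc]
  rw [this]
  simp [Matrix.trace, Matrix.diagonal_mul]

theorem smooth_exp {K : Type*} [TopologicalSpace K] [CompactSpace K] :
    ContDiff ℝ (⊤ : ℕ∞) (NormedSpace.exp : C(K, ℝ) → C(K, ℝ)) := by
  rw [contDiff_iff_contDiffAt]
  intro x
  exact (NormedSpace.exp_analytic (𝕂 := ℝ) x).contDiffAt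

theorem hasDerivAt_exp_comp {K : Type*} [TopologicalSpace K] [CompactSpace K]
    {f : ℝ → C(K, ℝ)} {f' : C(K, ℝ)} {t : ℝ} (h : HasDerivAt f f' t) :
    HasDerivAt (fun s => NormedSpace.exp (f s)) (f' * NormedSpace.exp (f t)) t := by
  have h1 := (hasFDerivAt_exp (𝕂 := ℝ) (x := f t)).comp_hasDerivAt t h
  convert! h1 using 1
  simp [mul_comm]

theorem smooth [IsProbabilityMeasure μ] (y : Fin n → ℝ) :
    ContDiff ℝ (⊤ : ℕ∞) (angInt n μ y) := by
  have : angInt n μ y = fun x => lam μ (NormedSpace.exp (expo y x)) := funext (angInt_eq μ y)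
  rw [this]
  refine (lam μ).contDiff.comp (smooth_exp.comp ?_)
  unfold expo
  fun_prop

theorem expo_update (y x : Fin n → ℝ) (i : Fin n) (t : ℝ) :
    expo y (update x i t) = expo y x + (t - x i) • mRe y i i := by
  have h : ∀ k, update x i t k • mRe y k k =
      x k • mRe y k k + if k = i then (t - x i) • mRe y i i else 0 := by
    intro k
    by_cases hk : k = i
    · subst hk
      simp only [update_self, if_true]
      module
    · simp [hk]
  simp only [expo, h, Finset.sum_add_distrib, Finset.sum_ite_eq', Finset.mem_univ, if_true]

theorem hasDerivAt_upd [IsProbabilityMeasure μ] (y x : Fin n → ℝ) (i : Fin n)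
    (g : C(Matrix.unitaryGroup (Fin n) ℂ, ℝ)) (t : ℝ) :
    HasDerivAt (fun t => lam μ (g * NormedSpace.exp (expo y (update x i t))))
      (lam μ (g * (mRe y i i * NormedSpace.exp (expo y (update x i t))))) t := by
  refine (lam μ).hasFDerivAt.comp_hasDerivAt t (HasDerivAt.const_mul g (hasDerivAt_exp_comp ?_))
  simp only [expo_update]
  have := (((hasDerivAt_id t).sub_const (x i)).smul_const (mRe y i i)).const_add (expo y x)
  simpa using this

theorem deriv_upd [IsProbabilityMeasure μ] (y x : Fin n → ℝ) (i : Fin n) :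
    deriv (fun t => angInt n μ y (update x i t)) =
      fun t => lam μ (mRe y i i * NormedSpace.exp (expo y (update x i t))) := by
  funext t
  have := (hasDerivAt_upd μ y x i 1 t).deriv
  simpa [angInt_eq] using this

theorem deriv2_upd [IsProbabilityMeasure μ] (y x : Fin n → ℝ) (i : Fin n) :
    iteratedDeriv 2 (fun t => angInt n μ y (update x i t)) (x i) =
      lam μ (mRe y i i * (mRe y i i * NormedSpace.exp (expo y x))) := by
  rw [iteratedDeriv_succ, iteratedDeriv_one, deriv_upd]
  have := (hasDerivAt_upd μ y x i (mRe y i i) (x i)).deriv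
  simpa using this

theorem lam_translate [μ.IsHaarMeasure] [IsProbabilityMeasure μ]
    (V : Matrix.unitaryGroup (Fin n) ℂ) (f g : C(Matrix.unitaryGroup (Fin n) ℂ, ℝ))
    (h : ∀ U, f (V * U) = g U) : lam μ g = lam μ f := by
  simp only [lam_apply, ← h]
  exact integral_mul_left_eq_self (fun U => f U) V

/-- Plane rotation. -/
noncomputable def rotMat (i j : Fin n) (c s : ℝ) : Matrix (Fin n) (Fin n) ℂ :=
  1 + ((c : ℂ) - 1) • (single i i 1 + single j j 1) + (s : ℂ) • (single i j 1 - single j i 1)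

theorem rotMat_mem {i j : Fin n} (hij : i ≠ j) {c s : ℝ} (h : c ^ 2 + s ^ 2 = 1) :
    rotMat i j c s ∈ Matrix.unitaryGroup (Fin n) ℂ := by
  rw [Matrix.mem_unitaryGroup_iff]
  have h' : (c : ℂ) ^ 2 + (s : ℂ) ^ 2 = 1 := by exact_mod_cast h
  have hs : star (rotMat i j c s) = 1 + ((c : ℂ) - 1) • (single i i 1 + single j j 1)
      - (s : ℂ) • (single i j 1 - single j i 1) := by
    simp only [rotMat, star_eq_conjTranspose, conjTranspose_add, conjTranspose_smul,
      conjTranspose_sub, conjTranspose_one, conjTranspose_single]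
    simp
    module
  rw [hs, rotMat]
  have hji := hij.symm
  have hs2 : (s : ℂ) ^ 2 = 1 - (c : ℂ) ^ 2 := by linear_combination h'
  set P : Matrix (Fin n) (Fin n) ℂ := single i i 1 + single j j 1 with hP
  set J : Matrix (Fin n) (Fin n) ℂ := single i j 1 - single j i 1 with hJ
  have hPP : P * P = P := by
    simp [hP, mul_add, add_mul, hij, hji]
  have hPJ : P * J = J := by
    simp [hP, hJ, mul_add, add_mul, mul_sub, sub_mul, hij, hji]
    try abel
  have hJP : J * P = J := by
    simp [hP, hJ, mul_add, add_mul, mul_sub, sub_mul, hij, hji]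
    try abel
  have hJJ : J * J = -P := by
    simp [hP, hJ, mul_add, add_mul, mul_sub, sub_mul, hij, hji]
    try abel
  simp only [mul_add, add_mul, mul_sub, sub_mul, one_mul, mul_one, smul_mul_assoc, mul_smul_comm,
    hPP, hPJ, hJP, hJJ, smul_smul]
  have : (c : ℂ) * c + (s : ℂ) * s - 1 = 0 := by linear_combination h'
  have h3 : ((c : ℂ) * c + (s : ℂ) * s - 1) • P = 0 := by rw [this, zero_smul]
  refine Eq.trans ?_ (add_zero (1 : Matrix (Fin n) (Fin n) ℂ))
  rw [← h3]
  module

theorem rot_mul_i {i j : Fin n} (hij : i ≠ j) (c s : ℝ) (N : Matrix (Fin n) (Fin n) ℂ)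
    (b : Fin n) : (rotMat i j c s * N) i b = c * N i b + s * N j b := by
  simp [rotMat, add_mul, sub_mul, hij, hij.symm]
  try ring

theorem rot_mul_j {i j : Fin n} (hij : i ≠ j) (c s : ℝ) (N : Matrix (Fin n) (Fin n) ℂ)
    (b : Fin n) : (rotMat i j c s * N) j b = c * N j b - s * N i b := by
  simp [rotMat, add_mul, sub_mul, hij, hij.symm]
  try ring

theorem rot_mul_k {i j : Fin n} {k : Fin n} (hi : k ≠ i) (hj : k ≠ j) (c s : ℝ)
    (N : Matrix (Fin n) (Fin n) ℂ)
    (b : Fin n) : (rotMat i j c s * N) k b = N k b := by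
  simp [rotMat, add_mul, sub_mul, hi, hj]

theorem mul_rot (i j : Fin n) (c s : ℝ) (N : Matrix (Fin n) (Fin n) ℂ)
    (a b : Fin n) : (N * (rotMat i j c s)ᴴ) a b = star ((rotMat i j c s * Nᴴ) b a) := by
  rw [← conjTranspose_apply, conjTranspose_mul, conjTranspose_conjTranspose]

theorem expo_diff (y x : Fin n → ℝ) {i j : Fin n} (hij : i ≠ j)
    (U V : Matrix.unitaryGroup (Fin n) ℂ)
    (h : ∀ k, k ≠ i → k ≠ j → (conjM y V k k) = (conjM y U k k)) :
    expo y x V = expo y x U + (x i * ((conjM y V i i).re - (conjM y U i i).re) +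
      x j * ((conjM y V j j).re - (conjM y U j j).re)) := by
  rw [← sub_eq_iff_eq_add', expo_apply, expo_apply, ← Finset.sum_sub_distrib]
  rw [Finset.sum_eq_add i j hij]
  · ring
  · intro k _ hk
    rw [h k hk.1 hk.2, sub_self]
  · simp
  · simp

/-- the rotated family -/
noncomputable def fam (y x : Fin n → ℝ) (i j : Fin n) (t : ℝ) :
    C(Matrix.unitaryGroup (Fin n) ℂ, ℝ) :=
  ((Real.cos t ^ 2 - Real.sin t ^ 2) • mRe y i j +
    (Real.cos t * Real.sin t) • (mRe y j j - mRe y i i)) *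
  NormedSpace.exp (expo y x + ((x i - x j) * Real.sin t ^ 2) • (mRe y j j - mRe y i i) +
    ((x i - x j) * (2 * (Real.cos t * Real.sin t))) • mRe y i j)

theorem fam_const [μ.IsHaarMeasure] [IsProbabilityMeasure μ] (y x : Fin n → ℝ) {i j : Fin n}
    (hij : i ≠ j) (t : ℝ) :
    lam μ (fam y x i j t) = lam μ (mRe y i j * NormedSpace.exp (expo y x)) := by
  have hcs : Real.cos t ^ 2 + Real.sin t ^ 2 = 1 := Real.cos_sq_add_sin_sq t
  refine lam_translate μ ⟨rotMat i j (Real.cos t) (Real.sin t), rotMat_mem hij hcs⟩ _ _ ?_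
  intro U
  set V : Matrix.unitaryGroup (Fin n) ℂ :=
    ⟨rotMat i j (Real.cos t) (Real.sin t), rotMat_mem hij hcs⟩ with hV
  have hM : conjM y (V * U) = rotMat i j (Real.cos t) (Real.sin t) *
      (conjM y U * (rotMat i j (Real.cos t) (Real.sin t))ᴴ) := by
    rw [conjM_mul, Matrix.mul_assoc]
  have hsym := conjM_symm y U
  have hre : ∀ a b, (conjM y U b a).re = (conjM y U a b).re := fun a b => by
    rw [hsym a b]; simp
  have him : ∀ a b, (conjM y U b a).im = -(conjM y U a b).im := fun a b => by
    rw [hsym a b]; simp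
  unfold fam
  clear_value V
  generalize Real.cos t = c at *
  generalize Real.sin t = s at *
  have hii : (conjM y (V * U) i i).re = c ^ 2 * (conjM y U i i).re
      + 2 * (c * s) * (conjM y U i j).re + s ^ 2 * (conjM y U j j).re := by
    rw [hM, rot_mul_i hij, mul_rot, mul_rot, rot_mul_i hij, rot_mul_i hij]
    simp [hre i j]
    ring
  have hjj : (conjM y (V * U) j j).re = s ^ 2 * (conjM y U i i).re
      - 2 * (c * s) * (conjM y U i j).re + c ^ 2 * (conjM y U j j).re := by
    rw [hM, rot_mul_j hij, mul_rot, mul_rot, rot_mul_j hij, rot_mul_j hij]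
    simp [hre i j]
    ring
  have hij' : (conjM y (V * U) i j).re = (c ^ 2 - s ^ 2) * (conjM y U i j).re
      + c * s * ((conjM y U j j).re - (conjM y U i i).re) := by
    rw [hM, rot_mul_i hij, mul_rot, mul_rot, rot_mul_j hij, rot_mul_j hij]
    simp [hre i j]
    ring
  have hkk : ∀ k, k ≠ i → k ≠ j → conjM y (V * U) k k = conjM y U k k := by
    intro k hi hj
    rw [hM, rot_mul_k hi hj, mul_rot, rot_mul_k hi hj]
    simp
  have hc : c ^ 2 = 1 - s ^ 2 := by linarith
  simp only [ContinuousMap.mul_apply, exp_apply]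
  rw [expo_diff y x hij U (V * U) hkk]
  simp only [mRe, ContinuousMap.coe_mk, ContinuousMap.add_apply, ContinuousMap.smul_apply,
    ContinuousMap.sub_apply, smul_eq_mul, hii, hjj, hij']
  congr 2
  rw [hc]
  ring

theorem fam_deriv (y x : Fin n → ℝ) (i j : Fin n) :
    HasDerivAt (fam y x i j)
      ((mRe y j j - mRe y i i) * NormedSpace.exp (expo y x) +
        (x i - x j) • ((2 : ℝ) • (mRe y i j * mRe y i j * NormedSpace.exp (expo y x)))) 0 := by
  have hc := Real.hasDerivAt_cos 0
  have hs := Real.hasDerivAt_sin 0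
  have h1 := (((hc.pow 2).sub (hs.pow 2)).smul_const (mRe y i j)).add
    ((hc.mul hs).smul_const (mRe y j j - mRe y i i))
  have h2 := (((hs.pow 2).const_mul (x i - x j)).smul_const (mRe y j j - mRe y i i)).const_add
    (expo y x)
  have h3 := h2.add ((((hc.mul hs).const_mul 2).const_mul (x i - x j)).smul_const (mRe y i j))
  have h4 := h1.mul (hasDerivAt_exp_comp h3)
  refine HasDerivAt.congr_deriv (f' := _) h4 ?_
  ext U
  simp
  ring

theorem phase [μ.IsHaarMeasure] [IsProbabilityMeasure μ] (y x : Fin n → ℝ) {i j : Fin n}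
    (hij : i ≠ j) :
    lam μ (mIm y i j * mIm y i j * NormedSpace.exp (expo y x)) =
      lam μ (mRe y i j * mRe y i j * NormedSpace.exp (expo y x)) := by
  have hD : Matrix.diagonal (fun k => if k = i then Complex.I else 1) ∈
      Matrix.unitaryGroup (Fin n) ℂ := by
    rw [Matrix.mem_unitaryGroup_iff, star_eq_conjTranspose, diagonal_conjTranspose,
      diagonal_mul_diagonal, ← diagonal_one]
    congr 1
    ext k
    by_cases hk : k = i <;> simp [hk]
  refine lam_translate μ ⟨_, hD⟩ _ _ ?_
  intro U
  set V : Matrix.unitaryGroup (Fin n) ℂ := ⟨_, hD⟩ with hV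
  have hM : ∀ a b, conjM y (V * U) a b = (if a = i then Complex.I else 1) * conjM y U a b *
      star (if b = i then Complex.I else (1 : ℂ)) := by
    intro a b
    rw [conjM_mul, hV]
    simp only [diagonal_conjTranspose, Matrix.mul_diagonal, Matrix.diagonal_mul]
    rfl
  have hkk : ∀ k, conjM y (V * U) k k = conjM y U k k := by
    intro k
    rw [hM]
    by_cases hk : k = i
    · simp only [hk, if_true]
      apply Complex.ext <;> simp
    · simp [hk]
  have he : expo y x (V * U) = expo y x U := by
    simp only [expo_apply, hkk]
  have hr : (conjM y (V * U) i j).re = -(conjM y U i j).im := by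
    rw [hM]
    simp [hij.symm]
  simp only [ContinuousMap.mul_apply, exp_apply, he]
  simp [mRe, mIm, hr]

theorem key [μ.IsHaarMeasure] [IsProbabilityMeasure μ] (y x : Fin n → ℝ) {i j : Fin n}
    (hij : i ≠ j) :
    lam μ (mRe y i i * NormedSpace.exp (expo y x)) - lam μ (mRe y j j * NormedSpace.exp (expo y x))
      = (x i - x j) * lam μ ((mRe y i j * mRe y i j + mIm y i j * mIm y i j) *
        NormedSpace.exp (expo y x)) := by
  have h1 : HasDerivAt (fun t => lam μ (fam y x i j t)) _ 0 :=
    (lam μ).hasFDerivAt.comp_hasDerivAt 0 (fam_deriv y x i j)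
  have h2 : (fun t => lam μ (fam y x i j t)) =
      fun _ => lam μ (mRe y i j * NormedSpace.exp (expo y x)) :=
    funext fun t => fam_const μ y x hij t
  rw [h2] at h1
  have h3 := h1.unique (hasDerivAt_const _ _)
  simp only [sub_mul, map_add, map_sub, map_smul, smul_eq_mul] at h3
  rw [add_mul, map_add, phase μ y x hij]
  linarith

theorem main_eq [μ.IsHaarMeasure] [IsProbabilityMeasure μ] (y x : Fin n → ℝ)
    (hx : ∀ i j : Fin n, i ≠ j → x i ≠ x j) :
    (∑ i : Fin n, iteratedDeriv 2 (fun t => angInt n μ y (Function.update x i t)) (x i)) +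
        (∑ i : Fin n, ∑ j ∈ Finset.univ.erase i,
          (1 / (x i - x j)) *
            (deriv (fun t => angInt n μ y (Function.update x i t)) (x i) -
              deriv (fun t => angInt n μ y (Function.update x j t)) (x j))) =
      (∑ j : Fin n, (y j) ^ 2) * angInt n μ y x := by
  simp only [deriv2_upd, deriv_upd, update_eq_self]
  rw [← Finset.sum_add_distrib]
  have hd : ∀ i, mRe y i i * (mRe y i i * NormedSpace.exp (expo y x)) =
      (mRe y i i * mRe y i i + mIm y i i * mIm y i i) * NormedSpace.exp (expo y x) := by
    intro i
    have : mIm y i i = 0 := by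
      ext U
      have h := congrArg Complex.im (conjM_symm y U i i)
      simp only [Complex.star_def, Complex.conj_im] at h
      simp only [mIm, ContinuousMap.coe_mk, ContinuousMap.zero_apply]
      linarith
    rw [this]
    ring
  have h1 : ∀ i, lam μ (mRe y i i * (mRe y i i * NormedSpace.exp (expo y x))) +
      (∑ j ∈ Finset.univ.erase i, (1 / (x i - x j)) *
        (lam μ (mRe y i i * NormedSpace.exp (expo y x)) -
          lam μ (mRe y j j * NormedSpace.exp (expo y x)))) =
      ∑ j, lam μ ((mRe y i j * mRe y i j + mIm y i j * mIm y i j) *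
        NormedSpace.exp (expo y x)) := by
    intro i
    rw [← Finset.add_sum_erase _ _ (Finset.mem_univ i), hd i]
    congr 1
    refine Finset.sum_congr rfl fun j hj => ?_
    have hne : i ≠ j := (Finset.ne_of_mem_erase hj).symm
    have : x i - x j ≠ 0 := sub_ne_zero.mpr (hx i j hne)
    rw [key μ y x hne]
    field_simp
  rw [Finset.sum_congr rfl fun i _ => h1 i, angInt_eq, ← smul_eq_mul, ← map_smul]
  simp only [← map_sum, ← Finset.sum_mul]
  congr 1
  ext U
  simp only [ContinuousMap.mul_apply, ContinuousMap.smul_apply, ContinuousMap.sum_apply,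
    ContinuousMap.add_apply, smul_eq_mul]
  rw [← conjM_sq y U]
  simp [mRe, mIm, sq]

end CalogeroAux

/-- Calogero equation for the angular integral, `β = 1`: for the Haar
probability measure `μ` on `U(n)`, the angular integral `I` is smooth, and at every `x`
with pairwise distinct entries,
`Σᵢ ∂²I/∂xᵢ² + Σ_{i≠j} (∂I/∂xᵢ − ∂I/∂xⱼ)/(xᵢ−xⱼ) = (Σⱼ yⱼ²) I(x)`. -/
theorem statement14 (n : ℕ) (hn : 1 ≤ n) (μ : Measure (Matrix.unitaryGroup (Fin n) ℂ))
    [μ.IsHaarMeasure] [IsProbabilityMeasure μ] (y : Fin n → ℝ) :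
    ContDiff ℝ (⊤ : ℕ∞) (angInt n μ y) ∧
    ∀ x : Fin n → ℝ, (∀ i j : Fin n, i ≠ j → x i ≠ x j) →
      (∑ i : Fin n, iteratedDeriv 2 (fun t => angInt n μ y (Function.update x i t)) (x i)) +
        (∑ i : Fin n, ∑ j ∈ Finset.univ.erase i,
          (1 / (x i - x j)) *
            (deriv (fun t => angInt n μ y (Function.update x i t)) (x i) -
              deriv (fun t => angInt n μ y (Function.update x j t)) (x j))) =
      (∑ j : Fin n, (y j) ^ 2) * angInt n μ y x := by
  exact ⟨CalogeroAux.smooth μ y, fun x hx => CalogeroAux.main_eq μ y x hx⟩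
end

section
/- Let μ be the Haar probability measure on the unitary group U(2) of 2×2 complex matrices. There exists a constant c > 0 such that for all real numbers x₁ ≠ x₂ and y₁ ≠ y₂, ∫_{U(2)} exp(Re tr(X U Y U⁻¹)) dμ(U) = c · (e^{x₁y₁+x₂y₂} − e^{x₁y₂+x₂y₁}) / ((x₁−x₂)(y₁−y₂)), where X = diag(x₁,x₂) and Y = diag(y₁,y₂). -/
open MeasureTheory Matrix

namespace IZ

abbrev G := Matrix.unitaryGroup (Fin 2) ℂ

lemma expand (k : ℕ) : ∃ r : ℝ × ℝ × ℝ × ℝ → ℝ, Continuous r ∧ ∀ a b c e : ℝ,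
    (a + b * e + c * e ^ 2) ^ (k + 2) = a ^ (k + 2) + (k + 2) * a ^ (k + 1) * b * e
      + ((k + 2) * a ^ (k + 1) * c + (k + 2) * (k + 1) / 2 * a ^ k * b ^ 2) * e ^ 2
      + e ^ 3 * r (a, b, c, e) := by
  induction k with
  | zero =>
    refine ⟨fun p => 2 * p.2.1 * p.2.2.1 + p.2.2.1 ^ 2 * p.2.2.2, by fun_prop, ?_⟩
    intro a b c e
    simp
    ring
  | succ k ih =>
    obtain ⟨r, hr, h⟩ := ih
    refine ⟨fun p => r p * (p.1 + p.2.1 * p.2.2.2 + p.2.2.1 * p.2.2.2 ^ 2)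
      + ((k + 2) * p.1 ^ (k + 1) * p.2.2.1 + (k + 2) * (k + 1) / 2 * p.1 ^ k * p.2.1 ^ 2)
          * (p.2.1 + p.2.2.1 * p.2.2.2)
      + (k + 2) * p.1 ^ (k + 1) * p.2.1 * p.2.2.1, by fun_prop, ?_⟩
    intro a b c e
    rw [show k + 1 + 2 = (k + 2) + 1 by ring, pow_succ, h a b c e]
    push_cast
    ring

lemma coord_meas (i j : Fin 2) : Measurable fun U : G => (U : Matrix (Fin 2) (Fin 2) ℂ) i j := by
  have h : Measurable fun A : Matrix (Fin 2) (Fin 2) ℂ => A i j := by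
    change Measurable fun A : Fin 2 → Fin 2 → ℂ => A i j
    fun_prop
  exact h.comp measurable_subtype_coe

lemma meas_mk {α : Type*} [MeasurableSpace α] (f : α → G)
    (h : ∀ i j, Measurable fun x => (f x : Matrix (Fin 2) (Fin 2) ℂ) i j) : Measurable f := by
  refine Measurable.subtype_mk (f := fun x => (f x : Matrix (Fin 2) (Fin 2) ℂ)) ?_
  exact measurable_pi_lambda _ fun i => measurable_pi_lambda _ fun j => h i j

instance : MeasurableMul G where
  measurable_const_mul V := by
    refine meas_mk _ fun i j => ?_
    simp only [Submonoid.coe_mul, Matrix.mul_apply, Fin.sum_univ_two]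
    exact ((coord_meas 0 j).const_mul _).add ((coord_meas 1 j).const_mul _)
  measurable_mul_const V := by
    refine meas_mk _ fun i j => ?_
    simp only [Submonoid.coe_mul, Matrix.mul_apply, Fin.sum_univ_two]
    exact ((coord_meas i 0).mul_const _).add ((coord_meas i 1).mul_const _)

def z (U : G) : ℂ := (U : Matrix (Fin 2) (Fin 2) ℂ) 0 0
def w (U : G) : ℂ := (U : Matrix (Fin 2) (Fin 2) ℂ) 1 0
def t (U : G) : ℝ := (z U).re ^ 2 + (z U).im ^ 2
def R (U : G) : ℝ := (z U).re * (w U).re + (z U).im * (w U).im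
def S (U : G) : ℝ := (z U).im * (w U).re - (z U).re * (w U).im

@[fun_prop] lemma z_meas : Measurable z := coord_meas 0 0
@[fun_prop] lemma w_meas : Measurable w := coord_meas 1 0
@[fun_prop] lemma zre : Measurable fun U => (z U).re := Complex.measurable_re.comp z_meas
@[fun_prop] lemma zim : Measurable fun U => (z U).im := Complex.measurable_im.comp z_meas
@[fun_prop] lemma wre : Measurable fun U => (w U).re := Complex.measurable_re.comp w_meas
@[fun_prop] lemma wim : Measurable fun U => (w U).im := Complex.measurable_im.comp w_meas
@[fun_prop] lemma t_meas : Measurable t := by unfold t; fun_prop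
@[fun_prop] lemma R_meas : Measurable R := by unfold R; fun_prop
@[fun_prop] lemma S_meas : Measurable S := by unfold S; fun_prop

lemma col (U : G) (j : Fin 2) :
    ((U : Matrix (Fin 2) (Fin 2) ℂ) 0 j).re ^ 2 + ((U : Matrix (Fin 2) (Fin 2) ℂ) 0 j).im ^ 2 +
    (((U : Matrix (Fin 2) (Fin 2) ℂ) 1 j).re ^ 2 + ((U : Matrix (Fin 2) (Fin 2) ℂ) 1 j).im ^ 2)
      = 1 := by
  have h := congrArg (fun A : Matrix (Fin 2) (Fin 2) ℂ => (A j j).re)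
    (Matrix.mem_unitaryGroup_iff'.1 U.2)
  simp [Matrix.mul_apply, Fin.sum_univ_two, Matrix.star_apply] at h
  linarith

lemma row (U : G) (i : Fin 2) :
    ((U : Matrix (Fin 2) (Fin 2) ℂ) i 0).re ^ 2 + ((U : Matrix (Fin 2) (Fin 2) ℂ) i 0).im ^ 2 +
    (((U : Matrix (Fin 2) (Fin 2) ℂ) i 1).re ^ 2 + ((U : Matrix (Fin 2) (Fin 2) ℂ) i 1).im ^ 2)
      = 1 := by
  have h := congrArg (fun A : Matrix (Fin 2) (Fin 2) ℂ => (A i i).re)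
    (Matrix.mem_unitaryGroup_iff.1 U.2)
  simp [Matrix.mul_apply, Fin.sum_univ_two, Matrix.star_apply] at h
  linarith

lemma w_sq (U : G) : (w U).re ^ 2 + (w U).im ^ 2 = 1 - t U := by
  have := col U 0
  unfold t z w
  linarith

lemma t_nonneg (U : G) : 0 ≤ t U := by unfold t; positivity
lemma t_le (U : G) : t U ≤ 1 := by
  have := w_sq U
  nlinarith [sq_nonneg (w U).re, sq_nonneg (w U).im]

lemma RS (U : G) : R U ^ 2 + S U ^ 2 = t U * (1 - t U) := by
  rw [← w_sq]; unfold R S t; ring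

lemma R_abs (U : G) : |R U| ≤ 1 := by
  have := RS U
  rw [abs_le]
  constructor <;> nlinarith [t_nonneg U, t_le U, sq_nonneg (S U), sq_nonneg (R U)]

lemma S_abs (U : G) : |S U| ≤ 1 := by
  have := RS U
  rw [abs_le]
  constructor <;> nlinarith [t_nonneg U, t_le U, sq_nonneg (S U), sq_nonneg (R U)]

lemma trace_eq (U : G) (x₁ x₂ y₁ y₂ : ℝ) :
    ((Matrix.trace (Matrix.diagonal ![(x₁ : ℂ), (x₂ : ℂ)] *
          (U : Matrix (Fin 2) (Fin 2) ℂ) * Matrix.diagonal ![(y₁ : ℂ), (y₂ : ℂ)] *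
          ((U⁻¹ : Matrix.unitaryGroup (Fin 2) ℂ) : Matrix (Fin 2) (Fin 2) ℂ))).re)
      = (x₁ * y₂ + x₂ * y₁) + ((x₁ - x₂) * (y₁ - y₂)) * t U := by
  have h1 := row U 0
  have h2 := row U 1
  have h3 := col U 0
  rw [Matrix.UnitaryGroup.inv_val]
  simp [Matrix.trace, Matrix.mul_apply, Fin.sum_univ_two, Matrix.star_apply,
    Matrix.diagonal_apply]
  unfold t z
  generalize (U : Matrix (Fin 2) (Fin 2) ℂ) 0 0 = a at *
  generalize (U : Matrix (Fin 2) (Fin 2) ℂ) 0 1 = b at *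
  generalize (U : Matrix (Fin 2) (Fin 2) ℂ) 1 0 = c at *
  generalize (U : Matrix (Fin 2) (Fin 2) ℂ) 1 1 = d at *
  linear_combination x₁ * y₂ * h1 + x₂ * y₂ * h2 + (x₂ * y₁ - x₂ * y₂) * h3

/-- the real rotation -/
noncomputable def V (e : ℝ) : G := ⟨!![((1 / √(1 + e ^ 2) : ℝ) : ℂ), ((e / √(1 + e ^ 2) : ℝ) : ℂ);
    ((-e / √(1 + e ^ 2) : ℝ) : ℂ), ((1 / √(1 + e ^ 2) : ℝ) : ℂ)], by
  have h0 : 0 < 1 + e ^ 2 := by positivity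
  have hs : √(1 + e ^ 2) ^ 2 = 1 + e ^ 2 := Real.sq_sqrt h0.le
  have hp : √(1 + e ^ 2) ≠ 0 := (Real.sqrt_pos.2 h0).ne'
  rw [Matrix.mem_unitaryGroup_iff]
  ext i j
  fin_cases i <;> fin_cases j <;>
    simp only [Matrix.mul_apply, Fin.sum_univ_two, Matrix.star_apply, Matrix.of_apply,
      Matrix.cons_val', Matrix.cons_val_zero, Matrix.cons_val_one, Matrix.cons_val_fin_one,
      Fin.zero_eta, Fin.mk_one, Fin.isValue, RCLike.star_def, Complex.conj_ofReal,
      Matrix.one_apply_eq, ← Complex.ofReal_mul, ← Complex.ofReal_add,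
      Matrix.one_apply, one_ne_zero, zero_ne_one, if_false] <;>
    norm_cast <;> field_simp <;> nlinarith⟩

def J : G := ⟨!![1, 0; 0, Complex.I], by
  rw [Matrix.mem_unitaryGroup_iff]
  ext i j
  fin_cases i <;> fin_cases j <;> simp [Matrix.mul_apply, Fin.sum_univ_two, Matrix.star_apply]⟩

lemma t_V (e : ℝ) (U : G) :
    t U + 2 * R U * e + (1 - t U) * e ^ 2 = (1 + e ^ 2) * t (V e * U) := by
  have h0 : 0 < 1 + e ^ 2 := by positivity
  have hs : √(1 + e ^ 2) ^ 2 = 1 + e ^ 2 := Real.sq_sqrt h0.le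
  have hp : √(1 + e ^ 2) ≠ 0 := (Real.sqrt_pos.2 h0).ne'
  have hz : z (V e * U) = ((1 / √(1 + e ^ 2) : ℝ) : ℂ) * z U + ((e / √(1 + e ^ 2) : ℝ) : ℂ) * w U := by
    unfold z w
    rw [Submonoid.coe_mul, Matrix.mul_apply, Fin.sum_univ_two]
    rfl
  rw [← w_sq]
  unfold t R
  rw [hz]
  simp only [Complex.add_re, Complex.add_im, Complex.re_ofReal_mul, Complex.im_ofReal_mul]
  generalize √(1 + e ^ 2) = q at *
  rw [← hs]
  field_simp
  ring

lemma z_J (U : G) : z (J * U) = z U := by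
  unfold z
  rw [Submonoid.coe_mul, Matrix.mul_apply, Fin.sum_univ_two]
  simp [J]

lemma w_J (U : G) : w (J * U) = Complex.I * w U := by
  unfold w
  rw [Submonoid.coe_mul, Matrix.mul_apply, Fin.sum_univ_two]
  simp [J]

lemma t_J (U : G) : t (J * U) = t U := by unfold t; rw [z_J]
lemma R_J (U : G) : R (J * U) = S U := by
  unfold R S; rw [z_J, w_J]; simp; ring
lemma S_J (U : G) : S (J * U) = - R U := by
  unfold R S; rw [z_J, w_J]; simp; ring

variable (μ : Measure (Matrix.unitaryGroup (Fin 2) ℂ)) [μ.IsHaarMeasure] [IsProbabilityMeasure μ]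

lemma integ {f : G → ℝ} (hf : Measurable f) (C : ℝ) (h : ∀ U, |f U| ≤ C) : Integrable f μ :=
  Integrable.of_bound hf.aestronglyMeasurable C (Filter.Eventually.of_forall h)

lemma t_pow (U : G) (k : ℕ) : |t U ^ k| ≤ 1 := by
  rw [abs_of_nonneg (pow_nonneg (t_nonneg U) k)]
  exact pow_le_one₀ (t_nonneg U) (t_le U)

lemma integ_t (k : ℕ) : Integrable (fun U => t U ^ k) μ :=
  integ μ (by fun_prop) 1 fun U => t_pow U k

lemma R_sq (U : G) : |R U ^ 2| ≤ 1 := by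
  rw [abs_pow]; exact pow_le_one₀ (abs_nonneg _) (R_abs U)

lemma S_sq (U : G) : |S U ^ 2| ≤ 1 := by
  rw [abs_pow]; exact pow_le_one₀ (abs_nonneg _) (S_abs U)

lemma integ_tR (k : ℕ) : Integrable (fun U => t U ^ k * R U) μ :=
  integ μ (by fun_prop) 1 fun U => by
    rw [abs_mul]; exact mul_le_one₀ (t_pow U k) (abs_nonneg _) (R_abs U)

lemma integ_tR2 (k : ℕ) : Integrable (fun U => t U ^ k * R U ^ 2) μ :=
  integ μ (by fun_prop) 1 fun U => by
    rw [abs_mul]; exact mul_le_one₀ (t_pow U k) (abs_nonneg _) (R_sq U)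

lemma integ_tS2 (k : ℕ) : Integrable (fun U => t U ^ k * S U ^ 2) μ :=
  integ μ (by fun_prop) 1 fun U => by
    rw [abs_mul]; exact mul_le_one₀ (t_pow U k) (abs_nonneg _) (S_sq U)

lemma int_R (k : ℕ) : ∫ U, t U ^ k * R U ∂μ = 0 := by
  have h1 := integral_mul_left_eq_self (μ := μ) (fun U => t U ^ k * R U) J
  have h2 := integral_mul_left_eq_self (μ := μ) (fun U => t U ^ k * S U) J
  simp only [t_J, R_J, S_J, mul_neg, integral_neg] at h1 h2
  linarith

lemma int_R2 (k : ℕ) : 2 * ∫ U, t U ^ k * R U ^ 2 ∂μ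
    = (∫ U, t U ^ (k + 1) ∂μ) - ∫ U, t U ^ (k + 2) ∂μ := by
  have h1 := integral_mul_left_eq_self (μ := μ) (fun U => t U ^ k * R U ^ 2) J
  simp only [t_J, R_J] at h1
  rw [← integral_sub (integ_t μ _) (integ_t μ _), two_mul]
  nth_rw 1 [← h1]
  rw [← integral_add (integ_tS2 μ k) (integ_tR2 μ k)]
  congr 1
  ext U
  linear_combination t U ^ k * RS U

lemma main_e (k : ℕ) (e : ℝ) : ∫ U, (t U + 2 * R U * e + (1 - t U) * e ^ 2) ^ k ∂μ
    = (1 + e ^ 2) ^ k * ∫ U, t U ^ k ∂μ := by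
  simp only [t_V, mul_pow]
  rw [integral_const_mul, integral_mul_left_eq_self (μ := μ) (fun U => t U ^ k) (V e)]

lemma small (B C : ℝ) (h : ∀ e : ℝ, 0 < e → e ≤ 1 → |B| ≤ C * e) : B = 0 := by
  by_contra hB
  have hp : 0 < |B| := abs_pos.2 hB
  have h1 := h 1 one_pos le_rfl
  have hC : 0 < C := by linarith
  have h2 := h (|B| / (2 * C)) (by positivity) (by
    rw [div_le_one (by positivity)]; linarith)
  have h3 : C * (|B| / (2 * C)) = |B| / 2 := by field_simp
  linarith

lemma moment_rec (k : ℕ) : (k + 3) * ∫ U, t U ^ (k + 2) ∂μ = (k + 2) * ∫ U, t U ^ (k + 1) ∂μ := by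
  obtain ⟨r, hr, hexp⟩ := expand k
  obtain ⟨C, hC⟩ := (isCompact_closedBall (0 : ℝ × ℝ × ℝ × ℝ) 2).exists_bound_of_continuousOn
    hr.continuousOn
  have hb : ∀ a b c e : ℝ, |a| ≤ 2 → |b| ≤ 2 → |c| ≤ 2 → |e| ≤ 2 → |r (a, b, c, e)| ≤ C := by
    intro a b c e ha hb hc he
    refine hC _ ?_
    simp [Prod.norm_def, ha, hb, hc, he]
  have hrU : ∀ e : ℝ, 0 < e → e ≤ 1 → ∀ U, |r (t U, 2 * R U, 1 - t U, e)| ≤ C := by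
    intro e he he1 U
    have h0 := t_nonneg U
    have h1 := t_le U
    have h2 := R_abs U
    apply hb
    · rw [abs_le]; constructor <;> linarith
    · rw [abs_mul, abs_two]; linarith
    · rw [abs_le]; constructor <;> linarith
    · rw [abs_le]; constructor <;> linarith
  set M1 := ∫ U, t U ^ (k + 1) ∂μ with hM1
  set M2 := ∫ U, t U ^ (k + 2) ∂μ with hM2
  have key : ((k : ℝ) + 2) * ((k + 2) * M1 - (k + 3) * M2) = 0 := by
    refine small _ (C + C * |M2|) ?_
    intro e he he1
    have hmain := main_e μ (k + 2) e
    have hri : Integrable (fun U => r (t U, 2 * R U, 1 - t U, e)) μ :=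
      integ μ (hr.measurable.comp (by fun_prop)) C (hrU e he he1)
    have hL : ∫ U, (t U + 2 * R U * e + (1 - t U) * e ^ 2) ^ (k + 2) ∂μ
        = M2 + (((k + 2) * (M1 - M2)) + (k + 2) * (k + 1) * (M1 - M2)) * e ^ 2
          + e ^ 3 * ∫ U, r (t U, 2 * R U, 1 - t U, e) ∂μ := by
      have : (fun U => (t U + 2 * R U * e + (1 - t U) * e ^ 2) ^ (k + 2)) = fun U =>
          t U ^ (k + 2) + (2 * (k + 2) * e) * (t U ^ (k + 1) * R U)
          + ((k + 2) * e ^ 2) * t U ^ (k + 1) - ((k + 2) * e ^ 2) * t U ^ (k + 2)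
          + (2 * (k + 2) * (k + 1) * e ^ 2) * (t U ^ k * R U ^ 2)
          + e ^ 3 * r (t U, 2 * R U, 1 - t U, e) := by
        ext U
        rw [hexp]
        ring
      have i0 := integ_t μ (k + 2)
      have i1 := (integ_tR μ (k + 1)).const_mul (2 * (k + 2) * e)
      have i2 := (integ_t μ (k + 1)).const_mul ((k + 2) * e ^ 2)
      have i3 := (integ_t μ (k + 2)).const_mul ((k + 2) * e ^ 2)
      have i4 := (integ_tR2 μ k).const_mul (2 * (k + 2) * (k + 1) * e ^ 2)
      have i5 := hri.const_mul (e ^ 3)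
      have j1 := i0.add i1
      have j2 := j1.add i2
      have j3 := j2.sub i3
      have j4 := j3.add i4
      have e5 := integral_add j4 i5
      have e4 := integral_add j3 i4
      have e3 := integral_sub j2 i3
      have e2 := integral_add j1 i2
      have e1 := integral_add i0 i1
      simp only [Pi.add_apply, Pi.sub_apply] at e1 e2 e3 e4 e5
      rw [this, e5, e4, e3, e2, e1]
      simp only [integral_const_mul]
      rw [int_R]
      linear_combination ((k + 2) * (k + 1) * e ^ 2) * int_R2 μ k
    have hRR : (1 + e ^ 2) ^ (k + 2) = 1 + (k + 2) * e ^ 2 + e ^ 3 * r (1, 0, 1, e) := by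
      have := hexp 1 0 1 e
      simp at this
      exact this
    rw [hL, hRR] at hmain
    have hI : |∫ U, r (t U, 2 * R U, 1 - t U, e) ∂μ| ≤ C := by
      have := norm_integral_le_of_norm_le_const (μ := μ) (f := fun U => r (t U, 2 * R U, 1 - t U, e))
        (C := C) (Filter.Eventually.of_forall (hrU e he he1))
      simpa using this
    have h1 : |r (1, 0, 1, e)| ≤ C := by
      apply hb <;> norm_num
      rw [abs_le]; constructor <;> linarith
    have heq : ((k : ℝ) + 2) * ((k + 2) * M1 - (k + 3) * M2)
        = e * (r (1, 0, 1, e) * M2 - ∫ U, r (t U, 2 * R U, 1 - t U, e) ∂μ) := by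
      have : e ^ 2 ≠ 0 := by positivity
      apply mul_left_cancel₀ this
      linear_combination hmain
    rw [heq, abs_mul, abs_of_pos he, mul_comm]
    refine mul_le_mul_of_nonneg_right ?_ he.le
    refine (abs_sub _ _).trans ?_
    rw [abs_mul]
    have := mul_le_mul_of_nonneg_right h1 (abs_nonneg M2)
    linarith
  have hk : (k : ℝ) + 2 ≠ 0 := by positivity
  have := (mul_eq_zero.1 key).resolve_left hk
  linarith

lemma moment_one : ∫ U, t U ∂μ = 1 / 2 := by
  have h := main_e μ 1 1
  simp only [pow_one, one_pow, mul_one] at h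
  have hR := int_R μ 0
  simp only [pow_zero, one_mul] at hR
  have : ∀ U, t U + 2 * R U + (1 - t U) = 1 + 2 * R U := fun U => by ring
  simp only [this] at h
  have iR := (integ_tR μ 0).const_mul 2
  simp only [pow_zero, one_mul] at iR
  rw [integral_add (integrable_const _) iR, integral_const_mul, hR] at h
  simp at h
  linarith

lemma moment (k : ℕ) : ∫ U, t U ^ k ∂μ = 1 / (k + 1) := by
  induction k with
  | zero => simp
  | succ k ih =>
    rcases k with _ | k
    · simp [moment_one]; norm_num
    · have := moment_rec μ k
      rw [ih] at this
      push_cast at this ⊢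
      have h2 : (k : ℝ) + 2 ≠ 0 := by positivity
      rw [show (k : ℝ) + 1 + 1 = k + 2 by ring, mul_one_div_cancel h2] at this
      rw [eq_div_iff (by positivity)]
      linarith

lemma laplace (d : ℝ) (hd : d ≠ 0) : ∫ U, Real.exp (d * t U) ∂μ = (Real.exp d - 1) / d := by
  have h1 : HasSum (fun k : ℕ => ∫ U, (d * t U) ^ k / k.factorial ∂μ)
      (∫ U, ∑' k : ℕ, (d * t U) ^ k / k.factorial ∂μ) := by
    have hInt : ∀ k : ℕ, Integrable (fun U => (d * t U) ^ k / k.factorial) μ := by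
      intro k
      have := (integ_t μ k).const_mul (d ^ k / k.factorial)
      convert this using 2
      ring
    refine hasSum_integral_of_summable_integral_norm hInt ?_
    refine Summable.of_nonneg_of_le (fun k => integral_nonneg fun U => norm_nonneg _) ?_
      (Real.summable_pow_div_factorial |d|)
    intro k
    have hle : ∀ U, ‖(d * t U) ^ k / k.factorial‖ ≤ |d| ^ k / k.factorial := by
      intro U
      rw [norm_div, mul_pow, norm_mul, norm_pow, Real.norm_eq_abs, Real.norm_eq_abs,
        RCLike.norm_natCast]
      gcongr
      exact mul_le_of_le_one_right (by positivity) (t_pow U k)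
    refine (integral_mono (hInt k).norm (integrable_const _) hle).trans ?_
    simp
  have h2 : ∀ U, ∑' k : ℕ, (d * t U) ^ k / k.factorial = Real.exp (d * t U) := by
    intro U
    rw [Real.exp_eq_exp_ℝ, NormedSpace.exp_eq_tsum_div]
  simp only [h2] at h1
  have h3 : ∀ k : ℕ, ∫ U, (d * t U) ^ k / k.factorial ∂μ
      = d ^ (k + 1) / (k + 1).factorial / d := by
    intro k
    simp only [mul_pow, mul_div_right_comm]
    rw [integral_const_mul, moment, Nat.factorial_succ]
    push_cast
    field_simp
    ring
  simp only [h3] at h1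
  have h4 : HasSum (fun k : ℕ => d ^ k / k.factorial) (Real.exp d) := by
    rw [Real.exp_eq_exp_ℝ]
    exact NormedSpace.expSeries_div_hasSum_exp d
  have h5 := ((hasSum_nat_add_iff' 1).2 h4).div_const d
  simp at h5
  exact h1.unique h5

end IZ

/-- the `n = 2` Itzykson–Zuber integral: for the Haar probability
measure `μ` on `U(2)`, there is a constant `c > 0` such that for all real `x₁ ≠ x₂` and
`y₁ ≠ y₂`,
`∫ e^{Re tr(X U Y U⁻¹)} dμ = c (e^{x₁y₁+x₂y₂} − e^{x₁y₂+x₂y₁})/((x₁−x₂)(y₁−y₂))`. -/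
theorem statement16 (μ : Measure (Matrix.unitaryGroup (Fin 2) ℂ))
    [μ.IsHaarMeasure] [IsProbabilityMeasure μ] :
    ∃ c : ℝ, 0 < c ∧ ∀ x₁ x₂ y₁ y₂ : ℝ, x₁ ≠ x₂ → y₁ ≠ y₂ →
      (∫ U : Matrix.unitaryGroup (Fin 2) ℂ,
        Real.exp ((Matrix.trace (Matrix.diagonal ![(x₁ : ℂ), (x₂ : ℂ)] *
          (U : Matrix (Fin 2) (Fin 2) ℂ) * Matrix.diagonal ![(y₁ : ℂ), (y₂ : ℂ)] *
          ((U⁻¹ : Matrix.unitaryGroup (Fin 2) ℂ) : Matrix (Fin 2) (Fin 2) ℂ))).re) ∂μ) =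
      c * (Real.exp (x₁ * y₁ + x₂ * y₂) - Real.exp (x₁ * y₂ + x₂ * y₁)) /
        ((x₁ - x₂) * (y₁ - y₂)) := by
  refine ⟨1, one_pos, fun x₁ x₂ y₁ y₂ hx hy => ?_⟩
  have hd : (x₁ - x₂) * (y₁ - y₂) ≠ 0 := mul_ne_zero (sub_ne_zero.2 hx) (sub_ne_zero.2 hy)
  simp only [IZ.trace_eq, Real.exp_add]
  rw [integral_const_mul, IZ.laplace μ _ hd, ← Real.exp_add, ← Real.exp_add, mul_div_assoc',
    mul_sub, ← Real.exp_add, one_mul, mul_one]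
  congr 3
  ring
end

section
/- Let n ≥ 1, let β > 0 be a real number, let V be a real polynomial of even degree ≥ 2 with positive leading coefficient, and let k ≥ 1 be an integer. Then ∫_{ℝⁿ} [ Σ_{i=1}^{n} k λ_i^{k−1} + 2β Σ_{1≤i<j≤n} Σ_{l=0}^{k−1} λ_i^{l} λ_j^{k−1−l} − Σ_{i=1}^{n} λ_i^{k} V'(λ_i) ] · ∏_{1≤i<j≤n} |λ_j − λ_i|^{2β} · e^{−Σ_{i=1}^{n} V(λ_i)} dλ₁⋯dλ_n = 0, where V' is the derivative of V; moreover the integrand is absolutely integrable over ℝⁿ. -/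
open MeasureTheory Finset Real

/-- The integrand of the first loop (Schwinger–Dyson) equation of the one-matrix
`β`-ensemble with potential `V`, arising from the change of variables
`λᵢ → λᵢ + ε λᵢᵏ`. -/
noncomputable def loopIntegrand (n : ℕ) (β : ℝ) (V : Polynomial ℝ) (k : ℕ)
    (l : Fin n → ℝ) : ℝ :=
  ((∑ i : Fin n, (k : ℝ) * l i ^ (k - 1)) +
      2 * β * ∑ i : Fin n, ∑ j ∈ Finset.univ.filter (fun j => i < j),
        ∑ m ∈ Finset.range k, l i ^ m * l j ^ (k - 1 - m) -
      ∑ i : Fin n, l i ^ k * (Polynomial.derivative V).eval (l i)) *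
    ((∏ i : Fin n, ∏ j ∈ Finset.univ.filter (fun j => i < j), |l j - l i| ^ (2 * β)) *
      Real.exp (-∑ i : Fin n, V.eval (l i)))

open Filter Topology

/-- Continuous functions on `ℝⁿ` of polynomial growth. -/
def PolyGrowth {n : ℕ} (F : (Fin n → ℝ) → ℝ) : Prop :=
  Continuous F ∧ ∃ (C : ℝ) (M : ℕ), 0 ≤ C ∧ ∀ l, |F l| ≤ C * (∏ i, (1 + |l i|)) ^ M

lemma one_le_prodGrowth {n : ℕ} (l : Fin n → ℝ) : 1 ≤ ∏ i, (1 + |l i|) :=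
  Finset.one_le_prod fun i => by simp

namespace PolyGrowth

variable {n : ℕ} {F G : (Fin n → ℝ) → ℝ}

lemma const (c : ℝ) : PolyGrowth (fun _ : Fin n → ℝ => c) :=
  ⟨continuous_const, |c|, 0, abs_nonneg _, fun l => by simp⟩

lemma coord (i : Fin n) : PolyGrowth (fun l : Fin n → ℝ => l i) := by
  refine ⟨continuous_apply i, 1, 1, zero_le_one, fun l => ?_⟩
  rw [pow_one, one_mul, ← Finset.mul_prod_erase _ _ (Finset.mem_univ i)]
  have h : 1 ≤ ∏ j ∈ Finset.univ.erase i, (1 + |l j|) :=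
    Finset.one_le_prod fun i => by simp
  nlinarith [abs_nonneg (l i)]

lemma mono (hG : PolyGrowth G) (hF : Continuous F) (h : ∀ l, |F l| ≤ |G l|) :
    PolyGrowth F := by
  obtain ⟨_, C, M, hC, hb⟩ := hG
  exact ⟨hF, C, M, hC, fun l => (h l).trans (hb l)⟩

lemma add (hF : PolyGrowth F) (hG : PolyGrowth G) : PolyGrowth (fun l => F l + G l) := by
  obtain ⟨c1, C, M, hC, hb⟩ := hF
  obtain ⟨c2, D, N, hD, hd⟩ := hG
  refine ⟨c1.add c2, C + D, M + N, by positivity, fun l => ?_⟩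
  have h1 := one_le_prodGrowth l
  have e1 : (∏ i, (1 + |l i|)) ^ M ≤ (∏ i, (1 + |l i|)) ^ (M + N) :=
    pow_le_pow_right₀ h1 (by omega)
  have e2 : (∏ i, (1 + |l i|)) ^ N ≤ (∏ i, (1 + |l i|)) ^ (M + N) :=
    pow_le_pow_right₀ h1 (by omega)
  calc |F l + G l| ≤ |F l| + |G l| := abs_add_le _ _
    _ ≤ C * (∏ i, (1 + |l i|)) ^ M + D * (∏ i, (1 + |l i|)) ^ N := add_le_add (hb l) (hd l)
    _ ≤ C * (∏ i, (1 + |l i|)) ^ (M + N) + D * (∏ i, (1 + |l i|)) ^ (M + N) := by gcongr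
    _ = _ := by ring

lemma mul (hF : PolyGrowth F) (hG : PolyGrowth G) : PolyGrowth (fun l => F l * G l) := by
  obtain ⟨c1, C, M, hC, hb⟩ := hF
  obtain ⟨c2, D, N, hD, hd⟩ := hG
  refine ⟨c1.mul c2, C * D, M + N, by positivity, fun l => ?_⟩
  rw [abs_mul]
  have h1 := one_le_prodGrowth l
  calc |F l| * |G l| ≤ (C * (∏ i, (1 + |l i|)) ^ M) * (D * (∏ i, (1 + |l i|)) ^ N) :=
        mul_le_mul (hb l) (hd l) (abs_nonneg _) (by positivity)
    _ = _ := by rw [pow_add]; ring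

lemma neg (hF : PolyGrowth F) : PolyGrowth (fun l => - F l) :=
  hF.mono hF.1.neg fun l => by rw [abs_neg]

lemma sub (hF : PolyGrowth F) (hG : PolyGrowth G) : PolyGrowth (fun l => F l - G l) := by
  simpa only [sub_eq_add_neg] using hF.add hG.neg

lemma abs (hF : PolyGrowth F) : PolyGrowth (fun l => |F l|) :=
  hF.mono hF.1.abs fun l => by rw [abs_abs]

lemma pow (hF : PolyGrowth F) (k : ℕ) : PolyGrowth (fun l => F l ^ k) := by
  induction k with
  | zero => simpa using const 1
  | succ k ih => simpa only [pow_succ] using ih.mul hF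

lemma sum {ι : Type*} (s : Finset ι) {f : ι → (Fin n → ℝ) → ℝ}
    (h : ∀ i ∈ s, PolyGrowth (f i)) : PolyGrowth (fun l => ∑ i ∈ s, f i l) := by
  classical
  induction s using Finset.induction_on with
  | empty => simpa using const 0
  | insert a s ha ih =>
    simp only [Finset.sum_insert ha]
    exact (h a (by simp)).add (ih fun i hi => h i (by simp [hi]))

lemma prod {ι : Type*} (s : Finset ι) {f : ι → (Fin n → ℝ) → ℝ}
    (h : ∀ i ∈ s, PolyGrowth (f i)) : PolyGrowth (fun l => ∏ i ∈ s, f i l) := by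
  classical
  induction s using Finset.induction_on with
  | empty => simpa using const 1
  | insert a s ha ih =>
    simp only [Finset.prod_insert ha]
    exact (h a (by simp)).mul (ih fun i hi => h i (by simp [hi]))

lemma poly (hF : PolyGrowth F) (P : Polynomial ℝ) : PolyGrowth (fun l => P.eval (F l)) := by
  simp only [Polynomial.eval_eq_sum_range]
  exact sum _ fun i _ => (const _).mul (hF.pow i)

lemma rpow (hF : PolyGrowth F) (h0 : ∀ l, 0 ≤ F l) {b : ℝ} (hb : 0 < b) :
    PolyGrowth (fun l => F l ^ b) := by
  refine (((const 1).add hF).pow ⌈b⌉₊).mono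
    (hF.1.rpow_const fun _ => Or.inr hb.le) fun l => ?_
  rw [abs_of_nonneg (Real.rpow_nonneg (h0 l) _),
    abs_of_nonneg (pow_nonneg (by linarith [h0 l]) _), ← Real.rpow_natCast]
  calc F l ^ b ≤ (1 + F l) ^ b := Real.rpow_le_rpow (h0 l) (by linarith) hb.le
    _ ≤ _ := Real.rpow_le_rpow_of_exponent_le (by linarith [h0 l]) (Nat.le_ceil b)

end PolyGrowth

lemma half_bound (V : Polynomial ℝ) (hdeg : 2 ≤ V.natDegree) (hlead : 0 < V.leadingCoeff) :
    ∃ C : ℝ, ∀ x : ℝ, 0 ≤ x → x - C ≤ V.eval x := by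
  have hd : (Polynomial.X : Polynomial ℝ).degree < V.degree := by
    rw [Polynomial.degree_X]
    have h0 : V ≠ 0 := by rintro rfl; simp at hdeg
    rw [Polynomial.degree_eq_natDegree h0]
    exact_mod_cast (by omega : 1 < V.natDegree)
  have ht : Tendsto (fun x => (V - Polynomial.X).eval x) atTop atTop := by
    apply Polynomial.tendsto_atTop_of_leadingCoeff_nonneg
    · rw [Polynomial.degree_sub_eq_left_of_degree_lt hd]
      exact lt_of_le_of_lt (by simp) hd
    · rw [Polynomial.leadingCoeff_sub_of_degree_lt hd]; exact hlead.le
  obtain ⟨x0, hx0⟩ := eventually_atTop.1 (ht.eventually_ge_atTop 0)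
  obtain ⟨m, hm⟩ := (isCompact_Icc (a := (0:ℝ)) (b := x0)).bddBelow_image
    (V - Polynomial.X).continuous.continuousOn
  refine ⟨|m|, fun x hx => ?_⟩
  rcases le_total x0 x with h | h
  · have := hx0 x h
    simp at this
    linarith [abs_nonneg m]
  · have := hm ⟨x, ⟨hx, h⟩, rfl⟩
    simp at this
    linarith [neg_abs_le m]

lemma full_bound (V : Polynomial ℝ) (hdeg : 2 ≤ V.natDegree) (heven : Even V.natDegree)
    (hlead : 0 < V.leadingCoeff) :
    ∃ C : ℝ, ∀ x : ℝ, |x| - C ≤ V.eval x := by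
  obtain ⟨C, hC⟩ := half_bound V hdeg hlead
  obtain ⟨D, hD⟩ := half_bound (V.comp (-Polynomial.X))
    (by rw [Polynomial.natDegree_comp]; simpa using hdeg)
    (by rw [Polynomial.leadingCoeff_comp (by simp)]; simpa [heven.neg_one_pow] using hlead)
  refine ⟨max C D, fun x => ?_⟩
  rcases le_total 0 x with h | h
  · rw [abs_of_nonneg h]; linarith [hC x h, le_max_left C D]
  · rw [abs_of_nonpos h]
    have := hD (-x) (by linarith)
    simp at this
    linarith [le_max_right C D]

lemma oneD_integrable (V : Polynomial ℝ) (hdeg : 2 ≤ V.natDegree) (heven : Even V.natDegree)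
    (hlead : 0 < V.leadingCoeff) (M : ℕ) :
    Integrable (fun x : ℝ => (1 + |x|) ^ M * Real.exp (-V.eval x)) := by
  obtain ⟨C, hC⟩ := full_bound V hdeg heven hlead
  refine (integrable_inv_one_add_sq.const_mul
    (((M + 2).factorial : ℝ) * Real.exp (1 + C))).mono' ?_ ?_
  · exact (by fun_prop : Continuous fun x : ℝ =>
      (1 + |x|) ^ M * Real.exp (-V.eval x)).aestronglyMeasurable
  · refine Eventually.of_forall fun x => ?_
    have hx := abs_nonneg x
    rw [Real.norm_of_nonneg (by positivity), ← div_eq_mul_inv, le_div_iff₀ (by positivity)]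
    have h1 := Real.pow_div_factorial_le_exp (x := 1 + |x|) (by positivity) (M + 2)
    rw [div_le_iff₀ (by positivity)] at h1
    have h2 : 1 + x ^ 2 ≤ (1 + |x|) ^ 2 := by nlinarith [sq_abs x]
    calc (1 + |x|) ^ M * Real.exp (-V.eval x) * (1 + x ^ 2)
        ≤ (1 + |x|) ^ M * Real.exp (-V.eval x) * (1 + |x|) ^ 2 := by gcongr
      _ = (1 + |x|) ^ (M + 2) * Real.exp (-V.eval x) := by ring
      _ ≤ (Real.exp (1 + |x|) * (M + 2).factorial) * Real.exp (C - |x|) := by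
          gcongr; linarith [hC x]
      _ = (M + 2).factorial * (Real.exp (1 + |x|) * Real.exp (C - |x|)) := by ring
      _ = _ := by rw [← Real.exp_add]; congr 2; ring

lemma PolyGrowth.integrable {n : ℕ} {F : (Fin n → ℝ) → ℝ} (hF : PolyGrowth F)
    (V : Polynomial ℝ) (hdeg : 2 ≤ V.natDegree) (heven : Even V.natDegree)
    (hlead : 0 < V.leadingCoeff) :
    Integrable (fun l => F l * Real.exp (-∑ i, V.eval (l i))) := by
  obtain ⟨c, C, M, hC, hb⟩ := hF
  have h : Integrable (fun l : Fin n → ℝ => ∏ i, ((1 + |l i|) ^ M * Real.exp (-V.eval (l i)))) :=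
    Integrable.fintype_prod (f := fun _ : Fin n => fun x : ℝ =>
      (1 + |x|) ^ M * Real.exp (-V.eval x)) fun _ => oneD_integrable V hdeg heven hlead M
  refine (h.const_mul C).mono' ?_ (Eventually.of_forall fun l => ?_)
  · exact (by fun_prop : Continuous fun l => F l * Real.exp (-∑ i, V.eval (l i))).aestronglyMeasurable
  · rw [norm_mul, Real.norm_eq_abs, Real.norm_eq_abs, Real.abs_exp, Finset.prod_mul_distrib,
      Finset.prod_pow, ← Real.exp_sum, Finset.sum_neg_distrib, ← mul_assoc]
    gcongr
    exact hb l

/-- Regularised Vandermonde weight. -/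
noncomputable def regU (n : ℕ) (β d : ℝ) (l : Fin n → ℝ) : ℝ :=
  ∏ i : Fin n, ∏ j ∈ Finset.univ.filter (fun j => i < j), ((l j - l i) ^ 2 + d) ^ β

/-- Directional derivative of the logarithm of the regularised weight. -/
noncomputable def regD (n : ℕ) (β : ℝ) (V : Polynomial ℝ) (d : ℝ) (l v : Fin n → ℝ) : ℝ :=
  (∑ i : Fin n, ∑ j ∈ Finset.univ.filter (fun j => i < j),
    β * (2 * (l j - l i) * (v j - v i) / ((l j - l i) ^ 2 + d))) -
  ∑ i, (Polynomial.derivative V).eval (l i) * v i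

lemma regU_growth (n : ℕ) {β d : ℝ} (hβ : 0 < β) (hd : 0 ≤ d) : PolyGrowth (regU n β d) := by
  unfold regU
  refine PolyGrowth.prod _ fun i _ => PolyGrowth.prod _ fun j _ => ?_
  refine PolyGrowth.rpow ?_ (fun l => by positivity) hβ
  exact (((PolyGrowth.coord j).sub (PolyGrowth.coord i)).pow 2).add (PolyGrowth.const d)

lemma regD_growth (n : ℕ) (β : ℝ) (V : Polynomial ℝ) {d : ℝ} (hd : 0 < d) (v : Fin n → ℝ) :
    PolyGrowth (fun l => regD n β V d l v) := by
  unfold regD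
  refine PolyGrowth.sub (PolyGrowth.sum _ fun i _ => PolyGrowth.sum _ fun j _ => ?_)
    (PolyGrowth.sum _ fun i _ => ((PolyGrowth.coord i).poly _).mul (PolyGrowth.const _))
  refine (PolyGrowth.const β).mul ?_
  have h : PolyGrowth (fun l : Fin n → ℝ => 2 * (l j - l i) * (v j - v i) * d⁻¹) :=
    (((PolyGrowth.const 2).mul ((PolyGrowth.coord j).sub (PolyGrowth.coord i))).mul
      (PolyGrowth.const _)).mul (PolyGrowth.const _)
  refine h.mono ?_ fun l => ?_
  · refine Continuous.div (by fun_prop) (by fun_prop) fun l => ?_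
    positivity
  · rw [div_eq_mul_inv, abs_mul, abs_mul _ d⁻¹]
    rw [abs_of_pos (a := d⁻¹) (by positivity), abs_of_pos (a := (_ + d)⁻¹) (by positivity)]
    gcongr
    nlinarith [sq_nonneg (l j - l i)]

lemma regW_eq_exp (n : ℕ) (β : ℝ) (V : Polynomial ℝ) {d : ℝ} (hd : 0 < d) (l : Fin n → ℝ) :
    regU n β d l * Real.exp (-∑ i, V.eval (l i)) =
      Real.exp ((∑ i : Fin n, ∑ j ∈ Finset.univ.filter (fun j => i < j),
        β * Real.log ((l j - l i) ^ 2 + d)) - ∑ i, V.eval (l i)) := by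
  rw [sub_eq_add_neg, Real.exp_add, Real.exp_sum, regU]
  congr 1
  refine Finset.prod_congr rfl fun i _ => ?_
  rw [Real.exp_sum]
  refine Finset.prod_congr rfl fun j _ => ?_
  rw [Real.rpow_def_of_pos (by positivity), mul_comm]

lemma regW_hasLineDeriv (n : ℕ) (β : ℝ) (V : Polynomial ℝ) {d : ℝ} (hd : 0 < d)
    (l v : Fin n → ℝ) :
    HasLineDerivAt ℝ (fun l => regU n β d l * Real.exp (-∑ i, V.eval (l i)))
      (regD n β V d l v * (regU n β d l * Real.exp (-∑ i, V.eval (l i)))) l v := by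
  simp only [regW_eq_exp n β V hd]
  unfold HasLineDerivAt
  have hc : ∀ i, HasDerivAt (fun t : ℝ => (l + t • v) i) (v i) 0 := fun i => by
    simpa using ((hasDerivAt_id (0:ℝ)).mul_const (v i)).const_add (l i)
  have h1 : ∀ i j, HasDerivAt
      (fun t : ℝ => β * Real.log (((l + t • v) j - (l + t • v) i) ^ 2 + d))
      (β * (2 * (l j - l i) * (v j - v i) / ((l j - l i) ^ 2 + d))) 0 := fun i j => by
    have := (((((hc j).fun_sub (hc i)).fun_pow 2).add_const d).log (by positivity)).const_mul β
    refine this.congr_deriv ?_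
    simp
  have h2 : ∀ i, HasDerivAt (fun t : ℝ => V.eval ((l + t • v) i))
      ((Polynomial.derivative V).eval (l i) * v i) 0 := fun i => by
    have := (V.hasDerivAt ((l + (0:ℝ) • v) i)).comp (0:ℝ) (hc i)
    simpa [Function.comp_def] using this
  have h3 := ((HasDerivAt.fun_sum (u := Finset.univ) fun i _ =>
    HasDerivAt.fun_sum (u := Finset.univ.filter (fun j => i < j)) fun j _ => h1 i j).fun_sub
      (HasDerivAt.fun_sum (u := Finset.univ) fun i _ => h2 i)).exp
  refine h3.congr_deriv ?_
  simp [regD, mul_comm]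

lemma regD_linear (n : ℕ) (β : ℝ) (V : Polynomial ℝ) (d : ℝ) (l v : Fin n → ℝ) :
    ∑ m, v m * regD n β V d l (Pi.single m 1) = regD n β V d l v := by
  let L : (Fin n → ℝ) →ₗ[ℝ] ℝ :=
    { toFun := regD n β V d l
      map_add' := fun a b => by
        simp only [regD, Pi.add_apply]
        rw [sub_add_sub_comm, ← Finset.sum_add_distrib, ← Finset.sum_add_distrib]
        congr 1
        · refine Finset.sum_congr rfl fun i _ => ?_
          rw [← Finset.sum_add_distrib]
          exact Finset.sum_congr rfl fun j _ => by ring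
        · exact Finset.sum_congr rfl fun j _ => by ring
      map_smul' := fun c a => by
        simp only [regD, Pi.smul_apply, smul_eq_mul, RingHom.id_apply, mul_sub, Finset.mul_sum]
        congr 1
        · refine Finset.sum_congr rfl fun i _ => ?_
          exact Finset.sum_congr rfl fun j _ => by ring
        · exact Finset.sum_congr rfl fun j _ => by ring }
  have h := LinearMap.pi_apply_eq_sum_univ L v
  change regD n β V d l v = ∑ i, v i * regD n β V d l _ at h
  rw [h]
  refine Finset.sum_congr rfl fun i _ => ?_
  congr 2
  ext j
  simp [Pi.single_apply, eq_comm]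

/-- Regularised loop integrand bracket. -/
noncomputable def regB (n : ℕ) (β : ℝ) (V : Polynomial ℝ) (k : ℕ) (d : ℝ)
    (l : Fin n → ℝ) : ℝ :=
  (∑ i : Fin n, (k : ℝ) * l i ^ (k - 1)) + regD n β V d l (fun i => l i ^ k)

lemma reg_term (n : ℕ) {β : ℝ} (hβ : 0 < β) (V : Polynomial ℝ)
    (hdeg : 2 ≤ V.natDegree) (heven : Even V.natDegree) (hlead : 0 < V.leadingCoeff)
    (k : ℕ) {d : ℝ} (hd : 0 < d) (m : Fin n) :
    Integrable (fun l : Fin n → ℝ =>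
      (k * l m ^ (k - 1) + l m ^ k * regD n β V d l (Pi.single m 1)) *
        (regU n β d l * Real.exp (-∑ i, V.eval (l i)))) ∧
    ∫ l : Fin n → ℝ, (k * l m ^ (k - 1) + l m ^ k * regD n β V d l (Pi.single m 1)) *
        (regU n β d l * Real.exp (-∑ i, V.eval (l i))) = 0 := by
  have hm := PolyGrowth.coord m
  have hU := regU_growth n hβ hd.le
  have i1 : Integrable (fun l : Fin n → ℝ =>
      (k * l m ^ (k - 1) + l m ^ k * regD n β V d l (Pi.single m 1)) *
        (regU n β d l * Real.exp (-∑ i, V.eval (l i)))) := by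
    simp only [← mul_assoc]
    exact ((((PolyGrowth.const _).mul (hm.pow _)).add
      ((hm.pow _).mul (regD_growth n β V hd _))).mul hU).integrable V hdeg heven hlead
  have i2 : Integrable (fun l : Fin n → ℝ =>
      l m ^ k * (regU n β d l * Real.exp (-∑ i, V.eval (l i)))) := by
    simp only [← mul_assoc]
    exact ((hm.pow _).mul hU).integrable V hdeg heven hlead
  refine ⟨i1, ?_⟩
  have key := integral_bilinear_hasLineDerivAt_right_eq_neg_left_of_integrable
    (μ := (volume : Measure (Fin n → ℝ)))
    (f := fun l : Fin n → ℝ => l m ^ k * (regU n β d l * Real.exp (-∑ i, V.eval (l i))))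
    (f' := fun l : Fin n → ℝ =>
      (k * l m ^ (k - 1) + l m ^ k * regD n β V d l (Pi.single m 1)) *
        (regU n β d l * Real.exp (-∑ i, V.eval (l i))))
    (g := fun _ => (1 : ℝ)) (g' := fun _ => (0 : ℝ)) (v := Pi.single m 1)
    (B := ContinuousLinearMap.mul ℝ ℝ) (by simpa using i1) (by simp) (by simpa using i2)
    (fun l _ => ?_) (fun l _ => ?_)
  · simpa using key
  · have h1 := regW_hasLineDeriv n β V hd l (Pi.single m 1)
    have h2 : HasDerivAt (fun t : ℝ => (l + t • (Pi.single m 1 : Fin n → ℝ)) m ^ k)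
        (k * l m ^ (k - 1)) 0 := by
      have : HasDerivAt (fun t : ℝ => (l + t • (Pi.single m 1 : Fin n → ℝ)) m) 1 0 := by
        simpa using (hasDerivAt_id (0:ℝ)).const_add (l m)
      simpa using this.fun_pow k
    unfold HasLineDerivAt at h1 ⊢
    refine (h2.fun_mul h1).congr_deriv ?_
    simp
    ring
  · simp [HasLineDerivAt, hasDerivAt_const]

lemma reg_integral (n : ℕ) {β : ℝ} (hβ : 0 < β) (V : Polynomial ℝ)
    (hdeg : 2 ≤ V.natDegree) (heven : Even V.natDegree) (hlead : 0 < V.leadingCoeff)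
    (k : ℕ) {d : ℝ} (hd : 0 < d) :
    Integrable (fun l : Fin n → ℝ => regB n β V k d l *
        (regU n β d l * Real.exp (-∑ i, V.eval (l i)))) ∧
    ∫ l : Fin n → ℝ, regB n β V k d l *
        (regU n β d l * Real.exp (-∑ i, V.eval (l i))) = 0 := by
  have h : ∀ l : Fin n → ℝ, regB n β V k d l *
        (regU n β d l * Real.exp (-∑ i, V.eval (l i))) =
      ∑ m, (k * l m ^ (k - 1) + l m ^ k * regD n β V d l (Pi.single m 1)) *
        (regU n β d l * Real.exp (-∑ i, V.eval (l i))) := fun l => by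
    rw [← Finset.sum_mul, Finset.sum_add_distrib, regD_linear n β V d l (fun i => l i ^ k), regB]
  simp only [h]
  have ht := fun m => reg_term n hβ V hdeg heven hlead k hd m
  refine ⟨integrable_finsetSum _ fun m _ => (ht m).1, ?_⟩
  rw [integral_finsetSum _ fun m _ => (ht m).1]
  exact Finset.sum_eq_zero fun m _ => (ht m).2

lemma regB_eq (n : ℕ) (β : ℝ) (V : Polynomial ℝ) (k : ℕ) (d : ℝ) (l : Fin n → ℝ) :
    regB n β V k d l = (∑ i : Fin n, (k : ℝ) * l i ^ (k - 1)) +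
      2 * β * ∑ i : Fin n, ∑ j ∈ Finset.univ.filter (fun j => i < j),
        ((l j - l i) ^ 2 / ((l j - l i) ^ 2 + d)) *
          ∑ m ∈ Finset.range k, l i ^ m * l j ^ (k - 1 - m) -
      ∑ i : Fin n, l i ^ k * (Polynomial.derivative V).eval (l i) := by
  rw [regB, regD, add_sub_assoc]
  congr 2
  · simp only [Finset.mul_sum (s := Finset.univ), Finset.mul_sum (s := Finset.univ.filter _)]
    refine Finset.sum_congr rfl fun i _ => Finset.sum_congr rfl fun j _ => ?_
    have := geom_sum₂_mul (l i) (l j) k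
    rw [← neg_sub (l i ^ k), ← this]
    ring
  · exact Finset.sum_congr rfl fun i _ => mul_comm _ _

/-- The dominating polynomial factor. -/
noncomputable def domB (n : ℕ) (β : ℝ) (V : Polynomial ℝ) (k : ℕ) (l : Fin n → ℝ) : ℝ :=
  (∑ i : Fin n, |(k : ℝ) * l i ^ (k - 1)|) +
      2 * β * ∑ i : Fin n, ∑ j ∈ Finset.univ.filter (fun j => i < j),
          |∑ m ∈ Finset.range k, l i ^ m * l j ^ (k - 1 - m)| +
      ∑ i : Fin n, |l i ^ k * (Polynomial.derivative V).eval (l i)|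

lemma domB_growth (n : ℕ) (β : ℝ) (V : Polynomial ℝ) (k : ℕ) :
    PolyGrowth (domB n β V k) := by
  have c := fun i : Fin n => PolyGrowth.coord i
  refine PolyGrowth.add (PolyGrowth.add ?_ ?_) ?_
  · exact PolyGrowth.sum _ fun i _ => ((PolyGrowth.const _).mul ((c i).pow _)).abs
  · refine (PolyGrowth.const _).mul
      (PolyGrowth.sum _ fun i _ => PolyGrowth.sum _ fun j _ => PolyGrowth.abs ?_)
    exact PolyGrowth.sum _ fun m _ => ((c i).pow _).mul ((c j).pow _)
  · exact PolyGrowth.sum _ fun i _ => (((c i).pow _).mul ((c i).poly _)).abs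

lemma regB_le (n : ℕ) {β : ℝ} (hβ : 0 < β) (V : Polynomial ℝ) (k : ℕ) {d : ℝ} (hd : 0 < d)
    (l : Fin n → ℝ) : |regB n β V k d l| ≤ domB n β V k l := by
  rw [regB_eq, domB]
  refine (abs_sub _ _).trans (add_le_add ((abs_add_le _ _).trans (add_le_add ?_ ?_)) ?_)
  · exact Finset.abs_sum_le_sum_abs _ _
  · rw [abs_mul, abs_of_pos (by positivity : 0 < 2 * β)]
    gcongr
    refine (Finset.abs_sum_le_sum_abs _ _).trans (Finset.sum_le_sum fun i _ => ?_)
    refine (Finset.abs_sum_le_sum_abs _ _).trans (Finset.sum_le_sum fun j _ => ?_)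
    rw [abs_mul, abs_of_nonneg (by positivity)]
    refine mul_le_of_le_one_left (abs_nonneg _) ?_
    rw [div_le_one (by positivity)]
    linarith
  · exact Finset.abs_sum_le_sum_abs _ _

lemma regU_nonneg (n : ℕ) (β : ℝ) {d : ℝ} (hd : 0 ≤ d) (l : Fin n → ℝ) : 0 ≤ regU n β d l :=
  Finset.prod_nonneg fun i _ => Finset.prod_nonneg fun j _ => Real.rpow_nonneg (by positivity) _

lemma regU_le (n : ℕ) {β : ℝ} (hβ : 0 < β) {d : ℝ} (hd : 0 ≤ d) (hd1 : d ≤ 1)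
    (l : Fin n → ℝ) : regU n β d l ≤ regU n β 1 l := by
  refine Finset.prod_le_prod
    (fun i _ => Finset.prod_nonneg fun j _ => Real.rpow_nonneg (by positivity) _) fun i _ => ?_
  refine Finset.prod_le_prod (fun j _ => Real.rpow_nonneg (by positivity) _) fun j _ => ?_
  exact Real.rpow_le_rpow (by positivity) (by linarith) hβ.le

lemma regU_zero (n : ℕ) (β : ℝ) (l : Fin n → ℝ) : regU n β 0 l =
    ∏ i : Fin n, ∏ j ∈ Finset.univ.filter (fun j => i < j), |l j - l i| ^ (2 * β) := by
  refine Finset.prod_congr rfl fun i _ => Finset.prod_congr rfl fun j _ => ?_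
  rw [add_zero, ← sq_abs, Real.rpow_mul (abs_nonneg _)]
  norm_num

lemma reg_tendsto (n : ℕ) {β : ℝ} (hβ : 0 < β) (V : Polynomial ℝ) (k : ℕ) (l : Fin n → ℝ) :
    Tendsto (fun d => regB n β V k d l * (regU n β d l * Real.exp (-∑ i, V.eval (l i))))
      (𝓝[>] 0) (𝓝 (loopIntegrand n β V k l)) := by
  have hU : Tendsto (fun d => regU n β d l) (𝓝[>] 0) (𝓝 (regU n β 0 l)) := by
    refine tendsto_nhdsWithin_of_tendsto_nhds (Continuous.tendsto ?_ 0)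
    unfold regU
    refine continuous_finsetProd _ fun i _ => continuous_finsetProd _ fun j _ => ?_
    exact Continuous.rpow_const (by fun_prop) fun _ => Or.inr hβ.le
  have hq : ∀ x : ℝ, Tendsto (fun d : ℝ => x ^ 2 / (x ^ 2 + d)) (𝓝[>] 0)
      (𝓝 (if x = 0 then 0 else 1)) := fun x => by
    split_ifs with hx
    · simp [hx]
    · refine tendsto_nhdsWithin_of_tendsto_nhds ?_
      have : ContinuousAt (fun d : ℝ => x ^ 2 / (x ^ 2 + d)) 0 :=
        ContinuousAt.div (by fun_prop) (by fun_prop) (by simpa using hx)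
      have h := this.tendsto
      simpa [div_self (pow_ne_zero 2 hx)] using h
  have hB : Tendsto (fun d => regB n β V k d l) (𝓝[>] 0)
      (𝓝 ((∑ i : Fin n, (k : ℝ) * l i ^ (k - 1)) +
      2 * β * ∑ i : Fin n, ∑ j ∈ Finset.univ.filter (fun j => i < j),
        (if l j - l i = 0 then 0 else 1) *
          ∑ m ∈ Finset.range k, l i ^ m * l j ^ (k - 1 - m) -
      ∑ i : Fin n, l i ^ k * (Polynomial.derivative V).eval (l i))) := by
    simp only [regB_eq]
    refine Tendsto.sub_const (Tendsto.const_add _ (Tendsto.const_mul _ ?_)) _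
    exact tendsto_finsetSum _ fun i _ => tendsto_finsetSum _ fun j _ => (hq _).mul_const _
  have h := hB.mul (hU.mul_const (Real.exp (-∑ i, V.eval (l i))))
  convert h using 2
  rw [loopIntegrand, ← regU_zero]
  by_cases h0 : regU n β 0 l = 0
  · simp [h0]
  · congr 4
    refine Finset.sum_congr rfl fun i _ => Finset.sum_congr rfl fun j hj => ?_
    rw [if_neg, one_mul]
    intro hx
    apply h0
    refine Finset.prod_eq_zero (Finset.mem_univ i) (Finset.prod_eq_zero hj ?_)
    simp [hx, Real.zero_rpow hβ.ne']

/-- loop equation of the one-matrix `β`-ensemble: for `n ≥ 1`,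
real `β > 0`, a real polynomial `V` of even degree `≥ 2` with positive leading
coefficient, and an integer `k ≥ 1`, the loop-equation integrand is absolutely
integrable on `ℝⁿ` and its integral vanishes. -/
theorem statement19 (n : ℕ) (hn : 1 ≤ n) (β : ℝ) (hβ : 0 < β) (V : Polynomial ℝ)
    (hdeg : 2 ≤ V.natDegree) (heven : Even V.natDegree) (hlead : 0 < V.leadingCoeff)
    (k : ℕ) (hk : 1 ≤ k) :
    Integrable (loopIntegrand n β V k) (volume : Measure (Fin n → ℝ)) ∧
      ∫ l : Fin n → ℝ, loopIntegrand n β V k l = 0 := by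
  constructor
  · have c := fun i : Fin n => PolyGrowth.coord i
    unfold loopIntegrand
    simp only [← regU_zero]
    simp only [← mul_assoc _ (regU n β 0 _)]
    refine PolyGrowth.integrable (PolyGrowth.mul ?_ (regU_growth n hβ le_rfl)) V hdeg heven hlead
    refine PolyGrowth.sub (PolyGrowth.add ?_ ?_) ?_
    · exact PolyGrowth.sum _ fun i _ => ((PolyGrowth.const _).mul ((c i).pow _))
    · refine (PolyGrowth.const _).mul
        (PolyGrowth.sum _ fun i _ => PolyGrowth.sum _ fun j _ => ?_)
      exact PolyGrowth.sum _ fun m _ => ((c i).pow _).mul ((c j).pow _)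
    · exact PolyGrowth.sum _ fun i _ => (((c i).pow _).mul ((c i).poly _))
  · have hpos : ∀ᶠ d : ℝ in 𝓝[>] 0, 0 < d := self_mem_nhdsWithin
    have hle : ∀ᶠ d : ℝ in 𝓝[>] 0, d ≤ 1 :=
      nhdsWithin_le_nhds (Iic_mem_nhds one_pos)
    have hlim := tendsto_integral_filter_of_dominated_convergence
      (μ := (volume : Measure (Fin n → ℝ))) (l := 𝓝[>] (0:ℝ))
      (F := fun d l => regB n β V k d l * (regU n β d l * Real.exp (-∑ i, V.eval (l i))))
      (f := loopIntegrand n β V k)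
      (fun l => (domB n β V k l * regU n β 1 l) * Real.exp (-∑ i, V.eval (l i)))
      (by
        filter_upwards [hpos] with d hd
        exact (reg_integral n hβ V hdeg heven hlead k hd).1.aestronglyMeasurable)
      (by
        filter_upwards [hpos, hle] with d hd hd1
        refine Eventually.of_forall fun l => ?_
        rw [← mul_assoc, norm_mul, norm_mul, Real.norm_eq_abs, Real.norm_eq_abs,
          Real.norm_eq_abs, Real.abs_exp, abs_of_nonneg (regU_nonneg n β hd.le l)]
        have h1 := regB_le n hβ V k hd l
        have h2 := regU_le n hβ hd.le hd1 l
        have h3 := regU_nonneg n β hd.le l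
        have h4 : 0 ≤ domB n β V k l := (abs_nonneg _).trans h1
        gcongr)
      (((domB_growth n β V k).mul (regU_growth n hβ zero_le_one)).integrable V hdeg heven hlead)
      (Eventually.of_forall fun l => reg_tendsto n hβ V k l)
    refine tendsto_nhds_unique hlim (tendsto_const_nhds.congr' ?_)
    filter_upwards [hpos] with d hd
    exact (reg_integral n hβ V hdeg heven hlead k hd).2.symm
end
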